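/- Let X be a geodesic metric space which admits a disc-thickening with a quadratic isoperimetric inequality. Suppose there exist ε ∈ (0,1) and s₀>0 such that every Lipschitz loop γ in X with length(γ) ≥ s₀ bounds a singular Lipschitz disc φ in L^∞(X) (with boundary κ∘γ) whose image is contained in the closed (1−ε)·(3/32)·length(γ)-neighborhood of κ(γ([0,1])). Then X is Gromov hyperbolic. -/

import Mathlib

open scoped NNReal ENNReal
open MeasureTheory Filter

universe u v

namespace SharpIsop

/-- The closed unit disc `D² ⊂ ℝ²`. -/
def D2 : Set (ℝ × ℝ) := {p | p.1 ^ 2 + p.2 ^ 2 ≤ 1}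

/-- The length (total variation over `[0,1]`) of a curve `γ : [0,1] → X`. -/
noncomputable def loopLength {X : Type u} [PseudoEMetricSpace X] (γ : ℝ → X) : ℝ :=
  (eVariationOn γ (Set.Icc 0 1)).toReal

/-- A Lipschitz loop in `X`: a Lipschitz map `γ : [0,1] → X` with `γ 0 = γ 1`. -/
def IsLipLoop {X : Type u} [PseudoEMetricSpace X] (γ : ℝ → X) : Prop :=
  (∃ K : ℝ≥0, LipschitzOnWith K γ (Set.Icc 0 1)) ∧ γ 0 = γ 1

/-- The metric (directional) derivative of `φ : ℝ² → X` at `x` in direction `v`,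
defined via a `limsup` so that it is everywhere defined (and agrees a.e. with the
limit when the latter exists). -/
noncomputable def mder {X : Type u} [PseudoMetricSpace X] (φ : ℝ × ℝ → X)
    (x v : ℝ × ℝ) : ℝ :=
  Filter.limsup (fun r : ℝ => dist (φ (x + r • v)) (φ x) / r) (nhdsWithin 0 (Set.Ioi 0))

/-- The Jacobian of a (semi)norm `s` on `ℝ²`:  `π / Leb²({v : s v ≤ 1})` if this set
has finite measure, `0` otherwise. -/
noncomputable def jac2 (s : ℝ × ℝ → ℝ) : ℝ :=
  if volume {v : ℝ × ℝ | s v ≤ 1} < ⊤ then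
    Real.pi / (volume {v : ℝ × ℝ | s v ≤ 1}).toReal
  else 0

/-- The parametrized (Hausdorff) area of a map `φ : D² → X`. -/
noncomputable def lipArea {X : Type u} [PseudoMetricSpace X] (φ : ℝ × ℝ → X) : ℝ :=
  ∫ x in D2, jac2 (mder φ x)

/-- `φ : D² → X` is a singular Lipschitz disc bounding the loop `γ : [0,1] → X`. -/
def BoundsLoop {X : Type u} [PseudoMetricSpace X] (φ : ℝ × ℝ → X) (γ : ℝ → X) : Prop :=
  (∃ K : ℝ≥0, LipschitzOnWith K φ D2) ∧
    ∀ s ∈ Set.Icc (0:ℝ) 1, φ (Real.cos (2 * Real.pi * s), Real.sin (2 * Real.pi * s)) = γ s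

/-- `g : [0, d x y] → X` is a geodesic from `x` to `y`. -/
def IsGeodesicSeg {X : Type u} [MetricSpace X] (x y : X) (g : ℝ → X) : Prop :=
  g 0 = x ∧ g (dist x y) = y ∧
    ∀ s ∈ Set.Icc (0:ℝ) (dist x y), ∀ t ∈ Set.Icc (0:ℝ) (dist x y),
      dist (g s) (g t) = |s - t|

/-- A geodesic metric space: any two points are joined by a geodesic. -/
def GeodesicSpace (X : Type u) [MetricSpace X] : Prop :=
  ∀ x y : X, ∃ g : ℝ → X, IsGeodesicSeg x y g

/-- Gromov hyperbolicity via δ-slim geodesic triangles. -/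
def GromovHyperbolic (X : Type u) [MetricSpace X] : Prop :=
  ∃ δ : ℝ, 0 ≤ δ ∧
    ∀ x y z : X, ∀ gxy gyz gzx : ℝ → X,
      IsGeodesicSeg x y gxy → IsGeodesicSeg y z gyz → IsGeodesicSeg z x gzx →
      ∀ s ∈ Set.Icc (0:ℝ) (dist x y),
        ∃ p ∈ gyz '' Set.Icc (0:ℝ) (dist y z) ∪ gzx '' Set.Icc (0:ℝ) (dist z x),
          dist (gxy s) p ≤ δ

/-- `L^∞(X)`: the Banach space of bounded real functions on `X` with sup norm. -/
abbrev Linfty (X : Type u) : Type u := lp (fun _ : X => ℝ) ⊤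

/-- The Kuratowski embedding `x ↦ d(x,·) − d(x₀,·)` of `X` into `L^∞(X)`. -/
noncomputable def kuratowski (X : Type u) [MetricSpace X] (x₀ : X) (x : X) : Linfty X :=
  ⟨fun y => dist x y - dist x₀ y, memℓp_infty ⟨dist x x₀, by
    rintro t ⟨y, rfl⟩
    simpa [Real.norm_eq_abs] using abs_dist_sub_le x x₀ y⟩⟩

/-- `Y` admits a quadratic isoperimetric inequality for curves (with singular
Lipschitz discs as fillings). -/
def QuadIsopSpace (Y : Type u) [MetricSpace Y] : Prop :=
  ∃ C > (0:ℝ), ∀ c : ℝ → Y, IsLipLoop c →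
    ∃ φ : ℝ × ℝ → Y, BoundsLoop φ c ∧ lipArea φ ≤ C * (loopLength c) ^ 2

/-- `X` admits a disc-thickening with a quadratic isoperimetric inequality. -/
def HasDiscThickeningQII (X : Type u) [MetricSpace X] : Prop :=
  ∃ (X' : Type u) (m : MetricSpace X') (ι : X → X'),
    letI := m
    CompleteSpace X' ∧ Isometry ι ∧
      EMetric.hausdorffEdist (Set.range ι) (Set.univ : Set X') ≠ ⊤ ∧
      QuadIsopSpace X'

/-!
Suppose that a disc bounding a loop stays at distance less than `R` from it, and weight the times of
the loop, seen as points of the unit circle, by how close the loop then comes to a given point of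
the disc. By a winding number argument, their weighted sum vanishes somewhere in the disc, or else,
at some boundary point, it is a negative multiple of that point. In both cases some `R`-ball meets
the loop at three times which cut it into arcs of at most half its length. The three chords between
these points are shorter than `2 * R`, that is, than `3 / 16` of the length of the loop.

Cutting a long loop along such chords shows that the constant `κ` in a coarse inequality
`|∮ f dg| ≤ κ * length ^ 2 + C`, for `1`-Lipschitz functions `f` and `g`, can always be replaced by
`9999 / 10000 * κ`, and therefore be made arbitrarily small. A small `κ` forces quasi-geodesics to
stay close to geodesics: if a geodesic had a point `o` at a large distance `D` from a quasi-geodesic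
with the same endpoints, part of the geodesic would close up, outside the `D`-ball around `o`, to a
loop of length `O(D)`; with `f` a bump function supported in that ball and `g` a truncated
distance from the start of that part, `∮ f dg` is of order `D ^ 2`. Finally, a side of a geodesic
triangle, followed up to its point nearest to the opposite vertex and left there along a geodesic
to that vertex, is a quasi-geodesic, so triangles are slim.
-/

section Disc

open scoped Real FourierTransform

lemma exists_continuous_exp_eq {E : Type*} [AddCommGroup E] [Module ℝ E] [TopologicalSpace E]
    [IsTopologicalAddGroup E] [ContinuousSMul ℝ E] [LocallyConvexSpace ℝ E] {s : Set E}
    (hs : Convex ℝ s) {g : E → ℂ} (hg : ContinuousOn g s) (h0 : ∀ x ∈ s, g x ≠ 0) :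
    ∃ f : s → ℂ, Continuous f ∧ ∀ x, Complex.exp (f x) = g x := by
  rcases s.eq_empty_or_nonempty with rfl | ⟨a, ha⟩
  · exact ⟨0, continuous_const, fun x => x.2.elim⟩
  have := hs.locallyPathConnectedSpace
  have := hs.contractibleSpace ⟨a, ha⟩
  obtain ⟨f, ⟨-, hf⟩, -⟩ := Complex.isCoveringMapOn_exp.existsUnique_continuousMap_lifts
    ⟨s.domRestrict g, hg.domRestrict⟩ (a₀ := ⟨a, ha⟩) (Complex.exp_log (h0 a ha)) fun x => h0 x x.2
  exact ⟨f, f.continuous, congrFun hf⟩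

lemma convex_D2 : Convex ℝ D2 := by
  have h : ConvexOn ℝ Set.univ fun x : ℝ => x ^ 2 := even_two.convexOn_pow
  simpa [D2] using ((h.comp_linearMap (LinearMap.fst ℝ ℝ ℝ)).add
    (h.comp_linearMap (LinearMap.snd ℝ ℝ ℝ))).convex_le 1

lemma isCompact_D2 : IsCompact D2 := by
  refine (isCompact_Icc (a := ((-1, -1) : ℝ × ℝ)) (b := (1, 1))).of_isClosed_subset
    (isClosed_le (by fun_prop) continuous_const) fun w hw => ?_
  have hw : w.1 ^ 2 + w.2 ^ 2 ≤ 1 := hw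
  exact ⟨⟨by nlinarith, by nlinarith⟩, ⟨by nlinarith, by nlinarith⟩⟩

/-- The point of the unit circle at which a disc bounding a loop takes the value of the loop at
time `s`. -/
noncomputable def circlePoint (s : ℝ) : ℝ × ℝ := (Real.cos (2 * π * s), Real.sin (2 * π * s))

lemma circlePoint_mem_D2 (s : ℝ) : circlePoint s ∈ D2 :=
  (Real.cos_sq_add_sin_sq _).le

lemma continuous_circlePoint : Continuous circlePoint := by
  unfold circlePoint
  fun_prop

lemma fourierChar_mul_fourierChar_neg_re (x c : ℝ) :
    ((𝐞 x : ℂ) * 𝐞 (-c)).re = Real.cos (2 * π * (x - c)) := by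
  rw [← Circle.coe_mul, ← AddChar.map_add_eq_mul, ← sub_eq_add_neg, Real.fourierChar_apply,
    Complex.exp_ofReal_mul_I_re]

lemma coe_fourierChar_mul_neg (s : ℝ) : (𝐞 s : ℂ) * 𝐞 (-s) = 1 := by
  rw [← Circle.coe_mul, ← AddChar.map_add_eq_mul, add_neg_cancel, AddChar.map_zero_eq_one,
    Circle.coe_one]

-- Along the circle, a logarithm of `F` would have to gain `0`, and `2πi` by comparison with `𝐞`.
lemma exists_circlePoint_mul_fourierChar_neg_notMem_slitPlane {F : ℝ × ℝ → ℂ}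
    (hF : ContinuousOn F D2) (h0 : ∀ w ∈ D2, F w ≠ 0) :
    ∃ s ∈ Set.Icc (0 : ℝ) 1, F (circlePoint s) * 𝐞 (-s) ∉ Complex.slitPlane := by
  by_contra! hG
  obtain ⟨f, hf, hfF⟩ := exists_continuous_exp_eq convex_D2 hF h0
  let c (s : ℝ) : D2 := ⟨circlePoint s, circlePoint_mem_D2 s⟩
  have hc : Continuous c := continuous_circlePoint.subtype_mk _
  let G (s : ℝ) : ℂ := F (circlePoint s) * 𝐞 (-s)
  have hGc : ContinuousOn G (Set.Icc 0 1) := by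
    refine (hF.comp continuous_circlePoint.continuousOn fun s _ => circlePoint_mem_D2 s).mul ?_
    exact (by fun_prop : Continuous fun s : ℝ => (𝐞 (-s) : ℂ)).continuousOn
  let h (s : ℝ) : ℂ := f (c s) - Complex.log (G s) - (2 * π * s : ℝ) * Complex.I
  have hh : ContinuousOn h (Set.Icc 0 1) :=
    ((hf.comp hc).continuousOn.sub (hGc.clog hG)).sub (by fun_prop)
  have hexp : ∀ s ∈ Set.Icc (0 : ℝ) 1, Complex.exp (h s) = 1 := by
    intro s hs
    rw [Complex.exp_sub, Complex.exp_sub, Complex.exp_log (Complex.slitPlane_ne_zero (hG s hs)),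
      hfF, ← Real.fourierChar_apply, div_div, mul_assoc, mul_comm (𝐞 (-s) : ℂ),
      coe_fourierChar_mul_neg, mul_one, div_self (h0 _ (circlePoint_mem_D2 s))]
  have hconst : h 0 = h 1 := Complex.isCoveringMap_exp.constOn_of_comp isPreconnected_Icc hh
    (fun s hs t ht => Subtype.ext ((hexp s hs).trans (hexp t ht).symm))
    (Set.left_mem_Icc.2 zero_le_one) (Set.right_mem_Icc.2 zero_le_one)
  have hcirc : circlePoint 0 = circlePoint 1 := by simp [circlePoint]
  have hchar : 𝐞 (-0) = 𝐞 (-1) := by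
    ext
    simp [Real.fourierChar_apply, Complex.exp_neg]
  simp only [h, c, G, hcirc, hchar] at hconst
  push_cast at hconst
  exact Complex.two_pi_I_ne_zero (by linear_combination hconst)

lemma exists_eq_zero_or_exists_eq_neg_mul_fourierChar {F : ℝ × ℝ → ℂ} (hF : ContinuousOn F D2) :
    (∃ w ∈ D2, F w = 0) ∨
      ∃ s ∈ Set.Icc (0 : ℝ) 1, ∃ a : ℝ, 0 ≤ a ∧ F (circlePoint s) = -a * (𝐞 s : ℂ) := by
  refine or_iff_not_imp_left.2 fun h0 => ?_
  push Not at h0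
  obtain ⟨s, hs, hns⟩ := exists_circlePoint_mul_fourierChar_neg_notMem_slitPlane hF h0
  rw [Complex.mem_slitPlane_iff_not_le_zero, not_not, Complex.le_def] at hns
  refine ⟨s, hs, -(F (circlePoint s) * 𝐞 (-s)).re, neg_nonneg.2 hns.1, ?_⟩
  rw [Complex.ofReal_neg, neg_neg, ← Complex.ext (z := F (circlePoint s) * 𝐞 (-s))
    (w := ((F (circlePoint s) * 𝐞 (-s)).re : ℂ)) rfl hns.2, mul_assoc, mul_comm (𝐞 (-s) : ℂ),
    coe_fourierChar_mul_neg, mul_one]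

lemma one_fourth_le_abs_of_cos_nonpos {x : ℝ} (h : Real.cos (2 * π * x) ≤ 0) : 1 / 4 ≤ |x| := by
  by_contra! hx
  have hπ := Real.pi_pos
  rw [abs_lt] at hx
  exact h.not_gt (Real.cos_pos_of_mem_Ioo ⟨by nlinarith, by nlinarith⟩)

/-- Three times `s ≤ t ≤ u` which cut the circle `[0, 1]/{0, 1}` into arcs of length at most
half of its total length. -/
structure IsBalanced (s t u : ℝ) : Prop where
  left_le : s ≤ t
  le_right : t ≤ u
  left_arc : t - s ≤ 1 / 2
  right_arc : u - t ≤ 1 / 2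
  outer_arc : 1 / 2 ≤ u - s

lemma exists_isBalanced {A : Finset ℝ} (hA : (A : Set ℝ) ⊆ Set.Icc 0 1)
    (h : ∀ c, ∃ x ∈ A, Real.cos (2 * π * (x - c)) ≤ 0) :
    ∃ s ∈ A, ∃ t ∈ A, ∃ u ∈ A, IsBalanced s t u := by
  have hne : A.Nonempty := let ⟨x, hx, _⟩ := h 0; ⟨x, hx⟩
  have hfar : ∀ c, ∃ x ∈ A, 1 / 4 ≤ |x - c| ∧ 1 / 4 ≤ |x + 1 - c| := by
    intro c
    obtain ⟨x, hx, hcos⟩ := h c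
    refine ⟨x, hx, one_fourth_le_abs_of_cos_nonpos hcos, one_fourth_le_abs_of_cos_nonpos ?_⟩
    rwa [show 2 * π * (x + 1 - c) = 2 * π * (x - c) + 2 * π by ring, Real.cos_add_two_pi]
  obtain ⟨s, hs, hmin⟩ := A.exists_min_image id hne
  obtain ⟨t, ht, hmax⟩ := (A.filter (· ≤ s + 1 / 2)).exists_max_image id
    ⟨s, by simp [hs]⟩
  simp only [Finset.mem_filter, id, and_imp] at ht hmin hmax
  by_cases hu : ∃ u ∈ A, s + 1 / 2 < u
  · obtain ⟨u, hu, humin⟩ := (A.filter (s + 1 / 2 < ·)).exists_min_image id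
      (by simpa [Finset.Nonempty] using hu)
    simp only [Finset.mem_filter, id, and_imp] at hu humin
    refine ⟨s, hs, t, ht.1, u, hu.1, hmin t ht.1, by linarith, by linarith, ?_, by linarith⟩
    by_contra! hgap
    obtain ⟨x, hx, hx0, hx1⟩ := hfar ((u + t + 1) / 2)
    have hxI := hA hx
    have huI := hA hu.1
    have htI := hA ht.1
    rcases lt_or_ge (s + 1 / 2) x with hlt | hge
    · have := humin x hx hlt
      exact hx0.not_gt (abs_lt.2 ⟨by linarith, by linarith [hxI.2, htI.1]⟩)
    · have := hmax x hx hge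
      exact hx1.not_gt (abs_lt.2 ⟨by linarith [hxI.1, huI.2], by linarith⟩)
  · push Not at hu
    refine ⟨s, hs, t, ht.1, t, ht.1, hmin t ht.1, le_rfl, by linarith, by linarith, ?_⟩
    by_contra! hgap
    obtain ⟨x, hx, hx0, -⟩ := hfar ((s + t) / 2)
    have := hmax x hx (hu x hx)
    have := hmin x hx
    exact hx0.not_gt (abs_lt.2 ⟨by linarith, by linarith⟩)

lemma exists_cos_nonpos_of_re_nonpos {T : Finset ℝ} {w : ℝ → ℝ} (hw : ∀ x ∈ T, 0 ≤ w x)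
    (hpos : ∃ x ∈ T, 0 < w x) {c : ℝ} (hc : ((∑ x ∈ T, (w x : ℂ) * 𝐞 x) * 𝐞 (-c)).re ≤ 0) :
    ∃ x ∈ T, 0 < w x ∧ Real.cos (2 * π * (x - c)) ≤ 0 := by
  by_contra! hcos
  have hre : ((∑ x ∈ T, (w x : ℂ) * 𝐞 x) * 𝐞 (-c)).re =
      ∑ x ∈ T, w x * Real.cos (2 * π * (x - c)) := by
    rw [Finset.sum_mul, Complex.re_sum]
    refine Finset.sum_congr rfl fun x _ => ?_
    rw [mul_assoc, Complex.re_ofReal_mul, fourierChar_mul_fourierChar_neg_re]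
  rw [hre] at hc
  refine hc.not_gt (Finset.sum_pos' (fun x hx => ?_) ?_)
  · rcases (hw x hx).eq_or_lt with h | h
    · rw [← h, zero_mul]
    · exact (mul_pos h (hcos x hx h)).le
  · obtain ⟨x, hx, h⟩ := hpos
    exact ⟨x, hx, mul_pos h (hcos x hx h)⟩

section

variable {Y : Type*} [PseudoMetricSpace Y] {φ : ℝ × ℝ → Y} {γ : ℝ → Y} {r R : ℝ}

lemma exists_finset_dist_lt (hφ : ContinuousOn φ D2)
    (hnear : ∀ w ∈ D2, Metric.infDist (φ w) (γ '' Set.Icc 0 1) ≤ r) (hR : r < R) :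
    ∃ T : Finset ℝ, (T : Set ℝ) ⊆ Set.Icc 0 1 ∧ ∀ w ∈ D2, ∃ x ∈ T, dist (φ w) (γ x) < R := by
  have hcover : φ '' D2 ⊆ ⋃ x ∈ Set.Icc (0 : ℝ) 1, Metric.ball (γ x) R := by
    rintro _ ⟨w, hw, rfl⟩
    obtain ⟨_, ⟨x, hx, rfl⟩, hdist⟩ := (Metric.infDist_lt_iff
      ⟨γ 0, Set.mem_image_of_mem γ (Set.left_mem_Icc.2 zero_le_one)⟩).1 ((hnear w hw).trans_lt hR)
    exact Set.mem_biUnion hx hdist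
  obtain ⟨T, hT, hfin, hTφ⟩ := (isCompact_D2.image_of_continuousOn hφ).elim_finite_subcover_image
    (fun _ _ => Metric.isOpen_ball) hcover
  refine ⟨hfin.toFinset, by simpa using hT, fun w hw => ?_⟩
  simpa using hTφ (Set.mem_image_of_mem φ hw)

-- The map sending `w` to the sum of the unit vectors `𝐞 x`, weighted by how far `γ x` is from
-- leaving the `R`-ball around `φ w`, has a zero or points inward somewhere on the circle.
lemma exists_finset_dist_lt_of_disc (hφ : ContinuousOn φ D2)
    (hbd : ∀ s ∈ Set.Icc (0 : ℝ) 1, φ (circlePoint s) = γ s)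
    (hnear : ∀ w ∈ D2, Metric.infDist (φ w) (γ '' Set.Icc 0 1) ≤ r) (hR : r < R) :
    ∃ y : Y, ∃ A : Finset ℝ, (A : Set ℝ) ⊆ Set.Icc 0 1 ∧ (∀ x ∈ A, dist y (γ x) < R) ∧
      ∀ c, ∃ x ∈ A, Real.cos (2 * π * (x - c)) ≤ 0 := by
  obtain ⟨T, hT, hTφ⟩ := exists_finset_dist_lt hφ hnear hR
  let W (w : ℝ × ℝ) (x : ℝ) : ℝ := max 0 (R - dist (φ w) (γ x))
  have hW0 (w x) : 0 ≤ W w x := le_max_left _ _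
  have hWpos {w x} : 0 < W w x ↔ dist (φ w) (γ x) < R := by simp [W]
  have hsub (w) : ((T.filter (0 < W w ·) : Finset ℝ) : Set ℝ) ⊆ Set.Icc 0 1 :=
    (Finset.coe_subset.2 (Finset.filter_subset _ _)).trans hT
  have hF : ContinuousOn (fun w => ∑ x ∈ T, (W w x : ℂ) * 𝐞 x) D2 := by fun_prop
  rcases exists_eq_zero_or_exists_eq_neg_mul_fourierChar hF with
    ⟨w, hw, hzero⟩ | ⟨s, hs, a, ha, heq⟩
  · refine ⟨φ w, T.filter (0 < W w ·), hsub w,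
      fun x hx => hWpos.1 (Finset.mem_filter.1 hx).2, fun c => ?_⟩
    obtain ⟨x, hx, hpos, hcos⟩ := exists_cos_nonpos_of_re_nonpos (c := c) (fun x _ => hW0 w x)
      (by simpa only [hWpos] using hTφ w hw) (by simp [hzero])
    exact ⟨x, Finset.mem_filter.2 ⟨hx, hpos⟩, hcos⟩
  · set w := circlePoint s
    have hw : w ∈ D2 := circlePoint_mem_D2 s
    obtain ⟨x₀, -, hx₀⟩ := hTφ w hw
    refine ⟨φ w, insert s (T.filter (0 < W w ·)), ?_, ?_, fun c => ?_⟩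
    · rw [Finset.coe_insert]
      exact Set.insert_subset hs (hsub w)
    · rintro x hx
      rcases Finset.mem_insert.1 hx with rfl | hx
      · rw [hbd x hs, dist_self]
        exact dist_nonneg.trans_lt hx₀
      · exact hWpos.1 (Finset.mem_filter.1 hx).2
    · by_contra! hcos
      have hs' := hcos s (Finset.mem_insert_self _ _)
      obtain ⟨x, hx, hpos, hx'⟩ := exists_cos_nonpos_of_re_nonpos (c := c) (fun x _ => hW0 w x)
        (by simpa only [hWpos] using hTφ w hw) (by
          rw [heq, mul_assoc, ← Complex.ofReal_neg, Complex.re_ofReal_mul,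
            fourierChar_mul_fourierChar_neg_re]
          exact mul_nonpos_of_nonpos_of_nonneg (neg_nonpos.2 ha) hs'.le)
      exact hx'.not_gt (hcos x (Finset.mem_insert_of_mem (Finset.mem_filter.2 ⟨hx, hpos⟩)))

theorem exists_isBalanced_dist_lt (hφ : ContinuousOn φ D2)
    (hbd : ∀ s ∈ Set.Icc (0 : ℝ) 1, φ (circlePoint s) = γ s)
    (hnear : ∀ w ∈ D2, Metric.infDist (φ w) (γ '' Set.Icc 0 1) ≤ r) (hR : r < R) :
    ∃ s ∈ Set.Icc (0 : ℝ) 1, ∃ t ∈ Set.Icc (0 : ℝ) 1, ∃ u ∈ Set.Icc (0 : ℝ) 1, IsBalanced s t u ∧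
      dist (γ s) (γ t) < 2 * R ∧ dist (γ t) (γ u) < 2 * R ∧ dist (γ s) (γ u) < 2 * R := by
  obtain ⟨y, A, hA, hy, hcos⟩ := exists_finset_dist_lt_of_disc hφ hbd hnear hR
  have hdist : ∀ a ∈ A, ∀ b ∈ A, dist (γ a) (γ b) < 2 * R := fun a ha b hb => by
    linarith [dist_triangle_left (γ a) (γ b) y, hy a ha, hy b hb]
  obtain ⟨s, hs, t, ht, u, hu, hbal⟩ := exists_isBalanced hA hcos
  exact ⟨s, hA hs, t, hA ht, u, hA hu, hbal, hdist s hs t ht, hdist t ht u hu, hdist s hs u hu⟩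

end

end Disc

section Curves

variable {X : Type*}

lemma lipschitzOnWith_Icc_ite [PseudoMetricSpace X] {K : ℝ≥0} {f g : ℝ → X} {a b c : ℝ}
    (hf : LipschitzOnWith K f (Set.Icc a b)) (hg : LipschitzOnWith K g (Set.Icc b c))
    (hfg : f b = g b) :
    LipschitzOnWith K (fun t => if t ≤ b then f t else g t) (Set.Icc a c) := by
  refine LipschitzOnWith.of_dist_le_mul fun s hs t ht => ?_
  wlog hst : s ≤ t generalizing s t
  · rw [dist_comm, dist_comm s]
    exact this t ht s hs (le_of_not_ge hst)
  rcases le_or_gt t b with htb | htb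
  · simpa only [if_pos htb, if_pos (hst.trans htb)] using
      hf.dist_le_mul s ⟨hs.1, hst.trans htb⟩ t ⟨ht.1, htb⟩
  rcases le_or_gt s b with hsb | hsb
  · simp only [if_pos hsb, if_neg htb.not_ge]
    have h₁ := hf.dist_le_mul s ⟨hs.1, hsb⟩ b ⟨hs.1.trans hsb, le_rfl⟩
    have h₂ := hg.dist_le_mul b ⟨le_rfl, htb.le.trans ht.2⟩ t ⟨htb.le, ht.2⟩
    have hadd : dist s b + dist b t = dist s t := by
      simp only [Real.dist_eq]
      rw [abs_of_nonpos, abs_of_nonpos, abs_of_nonpos] <;> linarith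
    calc dist (f s) (g t) ≤ dist (f s) (f b) + dist (g b) (g t) := hfg ▸ dist_triangle _ _ _
      _ ≤ K * dist s b + K * dist b t := add_le_add h₁ h₂
      _ = K * dist s t := by rw [← mul_add, hadd]
  · simpa only [if_neg htb.not_ge, if_neg hsb.not_ge] using
      hg.dist_le_mul s ⟨hsb.le, hst.trans ht.2⟩ t ⟨htb.le, ht.2⟩

lemma IsGeodesicSeg.lipschitzOnWith [MetricSpace X] {x y : X} {g : ℝ → X}
    (hg : IsGeodesicSeg x y g) : LipschitzOnWith 1 g (Set.Icc 0 (dist x y)) :=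
  LipschitzOnWith.of_dist_le_mul fun s hs t ht => by
    rw [hg.2.2 s hs t ht, NNReal.coe_one, one_mul, Real.dist_eq]

lemma IsGeodesicSeg.reverse [MetricSpace X] {x y : X} {g : ℝ → X} (hg : IsGeodesicSeg x y g) :
    IsGeodesicSeg y x fun t => g (dist x y - t) := by
  obtain ⟨h0, h1, hdist⟩ := hg
  refine ⟨by simp [h1], by simp [dist_comm y x, h0], fun s hs t ht => ?_⟩
  rw [dist_comm y x] at hs ht
  rw [hdist _ ⟨by linarith [hs.2], by linarith [hs.1]⟩ _ ⟨by linarith [ht.2], by linarith [ht.1]⟩,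
    sub_sub_sub_cancel_left, abs_sub_comm]

lemma eVariationOn_le_of_lipschitzOnWith [PseudoEMetricSpace X] {K : ℝ≥0} {γ : ℝ → X}
    (hγ : LipschitzOnWith K γ (Set.Icc 0 1)) : eVariationOn γ (Set.Icc 0 1) ≤ K := by
  have hid : eVariationOn (id : ℝ → ℝ) (Set.Icc 0 1) ≤ 1 := by simp
  calc eVariationOn γ (Set.Icc 0 1) ≤ K * eVariationOn id (Set.Icc 0 1) :=
        hγ.comp_eVariationOn_le (Set.mapsTo_id _)
    _ ≤ K * 1 := by gcongr
    _ = K := mul_one _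

lemma loopLength_nonneg [PseudoEMetricSpace X] (γ : ℝ → X) : 0 ≤ loopLength γ :=
  ENNReal.toReal_nonneg

lemma loopLength_le [PseudoEMetricSpace X] {K : ℝ≥0} {γ : ℝ → X}
    (hγ : LipschitzOnWith K γ (Set.Icc 0 1)) : loopLength γ ≤ K :=
  ENNReal.toReal_mono ENNReal.coe_ne_top (eVariationOn_le_of_lipschitzOnWith hγ)

lemma dist_le_loopLength [PseudoMetricSpace X] {K : ℝ≥0} {γ : ℝ → X}
    (hγ : LipschitzOnWith K γ (Set.Icc 0 1)) {s t : ℝ} (hs : s ∈ Set.Icc (0 : ℝ) 1)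
    (ht : t ∈ Set.Icc (0 : ℝ) 1) : dist (γ s) (γ t) ≤ loopLength γ := by
  rw [dist_edist]
  exact ENNReal.toReal_mono
    ((eVariationOn_le_of_lipschitzOnWith hγ).trans_lt ENNReal.coe_lt_top).ne
    (eVariationOn.edist_le γ hs ht)

end Curves

section DiscretePaths

/-- A discrete path from `x` to `y` of length `n`: a sequence of which only the values at
`0, …, n` matter, starting at `x`, ending at `y` and with steps of length at most one. A discrete
loop is a discrete path from a point to itself. -/
structure IsDiscretePath {X : Type*} [PseudoMetricSpace X] (x y : X) (n : ℕ) (p : ℕ → X) :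
    Prop where
  source : p 0 = x
  target : p n = y
  dist_succ_le : ∀ t < n, dist (p t) (p (t + 1)) ≤ 1

/-- The path `p` up to time `n`, followed by `q`. -/
def concat {X : Type*} (p : ℕ → X) (n : ℕ) (q : ℕ → X) (t : ℕ) : X :=
  if t ≤ n then p t else q (t - n)

/-- The path `p` of length `n` run backwards. -/
def reverse {X : Type*} (p : ℕ → X) (n t : ℕ) : X := p (n - t)

/-- The loop `p` of length `n`, based at its point at time `i`. -/
def rotate {X : Type*} (p : ℕ → X) (n i : ℕ) : ℕ → X := concat (fun t => p (i + t)) (n - i) p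

variable {X : Type*} {p q : ℕ → X} {m n i j : ℕ}

lemma concat_of_le (h : i ≤ n) : concat p n q i = p i := if_pos h

lemma concat_add (h : p n = q 0) (i : ℕ) : concat p n q (n + i) = q i := by
  rcases i.eq_zero_or_pos with rfl | hi
  · simp [concat, h]
  · simp [concat, hi.ne']

lemma rotate_sub (hij : i ≤ j) (hj : j ≤ n) : rotate p n i (j - i) = p j := by
  rw [rotate, concat_of_le (Nat.sub_le_sub_right hj i), Nat.add_sub_cancel' hij]

lemma rotate_sub_add (hp : p n = p 0) (hi : i ≤ n) (j : ℕ) : rotate p n i (n - i + j) = p j :=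
  concat_add (by rw [Nat.add_sub_cancel' hi, hp]) j

variable [PseudoMetricSpace X] {x y z : X}

namespace IsDiscretePath

lemma concat (hp : IsDiscretePath x y n p) (hq : IsDiscretePath y z m q) :
    IsDiscretePath x z (n + m) (concat p n q) := by
  have h : p n = q 0 := hp.target.trans hq.source.symm
  refine ⟨(concat_of_le n.zero_le).trans hp.source, (concat_add h m).trans hq.target,
    fun t ht => ?_⟩
  rcases lt_or_ge t n with htn | htn
  · rw [concat_of_le htn.le, concat_of_le htn]
    exact hp.dist_succ_le t htn
  · obtain ⟨s, rfl⟩ := Nat.exists_eq_add_of_le htn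
    rw [add_assoc, concat_add h, concat_add h]
    exact hq.dist_succ_le s (by omega)

lemma reverse (hp : IsDiscretePath x y n p) : IsDiscretePath y x n (reverse p n) := by
  refine ⟨hp.target, (congrArg p n.sub_self).trans hp.source, fun t ht => ?_⟩
  have h := hp.dist_succ_le (n - (t + 1)) (by omega)
  rwa [dist_comm, show n - (t + 1) + 1 = n - t by omega] at h

lemma segment (hp : IsDiscretePath x y n p) (hij : i ≤ j) (hj : j ≤ n) :
    IsDiscretePath (p i) (p j) (j - i) fun t => p (i + t) :=
  ⟨rfl, congrArg p (Nat.add_sub_cancel' hij), fun t ht => hp.dist_succ_le (i + t) (by omega)⟩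

lemma rotate (hp : IsDiscretePath x x n p) (hi : i ≤ n) :
    IsDiscretePath (p i) (p i) n (rotate p n i) := by
  have h := (hp.segment hi le_rfl).concat (hp.target ▸ hp.source ▸ hp.segment i.zero_le hi)
  simpa only [Nat.sub_add_cancel hi, tsub_zero, zero_add, SharpIsop.rotate] using h

lemma dist_le (hp : IsDiscretePath x y n p) (hij : i ≤ j) (hj : j ≤ n) :
    dist (p i) (p j) ≤ (j : ℝ) - i := by
  calc dist (p i) (p j) ≤ ∑ t ∈ Finset.Ico i j, dist (p t) (p (t + 1)) :=
        dist_le_Ico_sum_dist p hij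
    _ ≤ ∑ _t ∈ Finset.Ico i j, (1 : ℝ) := Finset.sum_le_sum fun _ ht =>
        hp.dist_succ_le _ ((Finset.mem_Ico.1 ht).2.trans_le hj)
    _ = (j : ℝ) - i := by simp [Nat.cast_sub hij]

end IsDiscretePath

lemma isDiscretePath_sample {c : ℝ → X} {a b : ℝ} (hab : a ≤ b)
    (hc : LipschitzOnWith 1 c (Set.Icc a b)) :
    IsDiscretePath (c a) (c b) ⌈b - a⌉₊ fun t => c (min b (a + t)) := by
  refine ⟨by simp [hab], ?_, fun t _ => ?_⟩
  · rw [min_eq_left (by linarith [Nat.le_ceil (b - a)])]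
  · have hmem (t : ℕ) : min b (a + t) ∈ Set.Icc a b :=
      ⟨le_min hab (le_add_of_nonneg_right t.cast_nonneg), min_le_left _ _⟩
    calc dist (c (min b (a + t))) (c (min b (a + (t + 1 : ℕ))))
        ≤ dist (min b (a + t)) (min b (a + (t + 1 : ℕ))) := by
          simpa using hc.dist_le_mul _ (hmem t) _ (hmem (t + 1))
      _ ≤ dist (a + t) (a + (t + 1 : ℕ)) := by
          simpa using (LipschitzWith.id.const_min b).dist_le_mul (a + t) (a + (t + 1 : ℕ))
      _ = 1 := by simp

lemma exists_chord {X : Type*} [MetricSpace X] (hX : GeodesicSpace X) (x y : X) :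
    ∃ (m : ℕ) (r : ℕ → X), IsDiscretePath x y m r ∧ (m : ℝ) < dist x y + 1 ∧
      ∀ s, ∀ t ≤ m, (t : ℝ) - s ≤ dist (r s) (r t) + 1 := by
  obtain ⟨g, hg⟩ := hX x y
  have hm : (⌈dist x y⌉₊ : ℝ) < dist x y + 1 := Nat.ceil_lt_add_one dist_nonneg
  refine ⟨⌈dist x y⌉₊, fun t => g (min (dist x y) t), ?_, hm, fun s t ht => ?_⟩
  · simpa [hg.1, hg.2.1] using isDiscretePath_sample dist_nonneg hg.lipschitzOnWith
  · have hmem (t : ℕ) : min (dist x y) t ∈ Set.Icc 0 (dist x y) :=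
      ⟨le_min dist_nonneg t.cast_nonneg, min_le_left _ _⟩
    have htd : (t : ℝ) ≤ dist x y + 1 := (Nat.cast_le.2 ht).trans hm.le
    rw [hg.2.2 _ (hmem s) _ (hmem t), abs_sub_comm]
    have hts : (t : ℝ) - 1 ≤ min (dist x y) t := le_min (by linarith) (by linarith)
    linarith [le_abs_self (min (dist x y) t - min (dist x y) (s : ℝ)),
      min_le_right (dist x y) (s : ℝ)]

lemma exists_lipschitzOnWith_interpolation {X : Type*} [MetricSpace X] (hX : GeodesicSpace X)
    {x y : X} {n : ℕ} {p : ℕ → X} (hp : IsDiscretePath x y n p) :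
    ∃ c : ℝ → X, LipschitzOnWith 1 c (Set.Icc 0 n) ∧ ∀ i ≤ n, c i = p i := by
  suffices h : ∀ k ≤ n, ∃ c : ℝ → X, LipschitzOnWith 1 c (Set.Icc 0 k) ∧ ∀ i ≤ k, c i = p i from
    h n le_rfl
  intro k hk
  induction k with
  | zero => exact ⟨fun _ => p 0, (LipschitzWith.const' _).lipschitzOnWith, by simp⟩
  | succ k ih =>
    obtain ⟨c, hc, hcp⟩ := ih (by omega)
    obtain ⟨g, hg⟩ := hX (p k) (p (k + 1))
    have hgk : LipschitzOnWith 1 (fun t : ℝ => g (min (dist (p k) (p (k + 1))) (t - k)))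
        (Set.Icc k (k + 1 : ℕ)) := by
      have hproj : LipschitzWith 1 fun t : ℝ => min (dist (p k) (p (k + 1))) (t - k) := by
        simpa using (LipschitzWith.id.sub (LipschitzWith.const (k : ℝ))).const_min _
      simpa [Function.comp_def] using hg.lipschitzOnWith.comp hproj.lipschitzOnWith fun t ht =>
        ⟨le_min dist_nonneg (sub_nonneg.2 ht.1), min_le_left _ _⟩
    refine ⟨_, lipschitzOnWith_Icc_ite hc hgk ?_, fun i hi => ?_⟩
    · rw [hcp k le_rfl, sub_self, min_eq_right dist_nonneg, hg.1]
    · rcases hi.lt_or_eq with hik | rfl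
      · rw [if_pos (Nat.cast_le.2 (Nat.lt_succ_iff.1 hik)), hcp i (Nat.lt_succ_iff.1 hik)]
      · rw [if_neg (by simp), Nat.cast_succ, add_sub_cancel_left,
          min_eq_left (hp.dist_succ_le k hk), hg.2.1]

end DiscretePaths

section ShortTriangles

/-- The points at times `i ≤ j ≤ k` of a loop `p` of length `n` cut it into three arcs of length at
most about `n / 2` each, and are at pairwise distance at most `D`. The additive `2` absorbs the
rounding of real times. -/
structure IsShortTriangle {X : Type*} [PseudoMetricSpace X] (p : ℕ → X) (n : ℕ) (D : ℝ)
    (i j k : ℕ) : Prop where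
  left_le : i ≤ j
  le_right : j ≤ k
  right_le : k ≤ n
  left_arc : 2 * j ≤ 2 * i + n + 2
  right_arc : 2 * k ≤ 2 * j + n + 2
  outer_arc : 2 * i + n ≤ 2 * k + 2
  dist_left : dist (p i) (p j) ≤ D
  dist_right : dist (p j) (p k) ≤ D
  dist_outer : dist (p i) (p k) ≤ D

/-- The output of the disc hypothesis: every loop of length `n ≥ N` has a short triangle of size
`3 / 16 * n`, with one unit to spare for a chord of integer length. -/
def HasShortTriangles (X : Type*) [PseudoMetricSpace X] (N : ℕ) : Prop :=
  ∀ n ≥ N, ∀ (x : X) (p : ℕ → X), IsDiscretePath x x n p →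
    ∃ i j k, IsShortTriangle p n (3 / 16 * n - 1) i j k

variable {X : Type*} {p : ℕ → X} {c : ℝ → X} {n : ℕ}

lemma dist_floor_le [PseudoMetricSpace X] (hc : LipschitzOnWith 1 c (Set.Icc 0 n))
    (hcp : ∀ i ≤ n, c i = p i) {s : ℝ} (hs : s ∈ Set.Icc (0 : ℝ) n) :
    dist (c s) (p ⌊s⌋₊) ≤ 1 := by
  have hfl := Nat.floor_le hs.1
  have hlt := Nat.lt_floor_add_one s
  rw [← hcp _ (Nat.floor_le_of_le hs.2)]
  calc dist (c s) (c ⌊s⌋₊) ≤ dist s ⌊s⌋₊ := by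
        simpa using hc.dist_le_mul s hs ⌊s⌋₊ ⟨Nat.cast_nonneg _, hfl.trans hs.2⟩
    _ ≤ 1 := by rw [Real.dist_eq, abs_of_nonneg] <;> linarith

lemma isShortTriangle_floor [PseudoMetricSpace X] (hc : LipschitzOnWith 1 c (Set.Icc 0 n))
    (hcp : ∀ i ≤ n, c i = p i) {s t u D : ℝ} (hs : s ∈ Set.Icc (0 : ℝ) 1)
    (ht : t ∈ Set.Icc (0 : ℝ) 1) (hu : u ∈ Set.Icc (0 : ℝ) 1) (hstu : IsBalanced s t u)
    (hst : dist (c (n * s)) (c (n * t)) ≤ D) (htu : dist (c (n * t)) (c (n * u)) ≤ D)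
    (hsu : dist (c (n * s)) (c (n * u)) ≤ D) :
    IsShortTriangle p n (D + 2) ⌊n * s⌋₊ ⌊n * t⌋₊ ⌊n * u⌋₊ := by
  have hn : (0 : ℝ) ≤ n := n.cast_nonneg
  have hmem {s : ℝ} (hs : s ∈ Set.Icc (0 : ℝ) 1) : n * s ∈ Set.Icc (0 : ℝ) n :=
    ⟨mul_nonneg hn hs.1, mul_le_of_le_one_right hn hs.2⟩
  have hround {s t : ℝ} (hs : s ∈ Set.Icc (0 : ℝ) 1) (ht : t ∈ Set.Icc (0 : ℝ) 1)
      (hst : dist (c (n * s)) (c (n * t)) ≤ D) :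
      dist (p ⌊n * s⌋₊) (p ⌊n * t⌋₊) ≤ D + 2 := by
    linarith [dist_floor_le hc hcp (hmem hs), dist_floor_le hc hcp (hmem ht),
      dist_triangle4 (p ⌊n * s⌋₊) (c (n * s)) (c (n * t)) (p ⌊n * t⌋₊),
      dist_comm (p ⌊n * s⌋₊) (c (n * s))]
  have hle {s : ℝ} (hs : s ∈ Set.Icc (0 : ℝ) 1) : (⌊n * s⌋₊ : ℝ) ≤ n * s :=
    Nat.floor_le (hmem hs).1
  have hlt (s : ℝ) : n * s < ⌊n * s⌋₊ + 1 := Nat.lt_floor_add_one _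
  have hleft := mul_le_mul_of_nonneg_left hstu.left_arc hn
  have hright := mul_le_mul_of_nonneg_left hstu.right_arc hn
  have houter := mul_le_mul_of_nonneg_left hstu.outer_arc hn
  refine ⟨Nat.floor_mono (mul_le_mul_of_nonneg_left hstu.left_le hn),
    Nat.floor_mono (mul_le_mul_of_nonneg_left hstu.le_right hn), Nat.floor_le_of_le (hmem hu).2,
    ?_, ?_, ?_, hround hs ht hst, hround ht hu htu, hround hs hu hsu⟩
  · exact_mod_cast (by linarith [hle ht, hlt s] :
      (2 : ℝ) * ⌊n * t⌋₊ ≤ 2 * ⌊n * s⌋₊ + n + 2)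
  · exact_mod_cast (by linarith [hle hu, hlt t] :
      (2 : ℝ) * ⌊n * u⌋₊ ≤ 2 * ⌊n * t⌋₊ + n + 2)
  · exact_mod_cast (by linarith [hle hs, hlt u] :
      (2 : ℝ) * ⌊n * s⌋₊ + n ≤ 2 * ⌊n * u⌋₊ + 2)

lemma isShortTriangle_of_forall_dist_le [PseudoMetricSpace X] {D : ℝ}
    (h : ∀ i ≤ n, ∀ j ≤ n, dist (p i) (p j) ≤ D) : IsShortTriangle p n D 0 (n / 3) (2 * n / 3) := by
  refine ⟨?_, ?_, ?_, ?_, ?_, ?_, h _ ?_ _ ?_, h _ ?_ _ ?_, h _ ?_ _ ?_⟩ <;> omega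

lemma lipschitzOnWith_comp_natCast_mul [PseudoMetricSpace X]
    (hc : LipschitzOnWith 1 c (Set.Icc 0 n)) :
    LipschitzOnWith n (fun s => c (n * s)) (Set.Icc 0 1) := by
  have hscale : LipschitzWith n fun s : ℝ => (n : ℝ) * s := by
    simpa using lipschitzWith_smul (β := ℝ) (n : ℝ)
  simpa [Function.comp_def] using hc.comp hscale.lipschitzOnWith fun s hs =>
    ⟨mul_nonneg n.cast_nonneg hs.1, mul_le_of_le_one_right n.cast_nonneg hs.2⟩

theorem exists_hasShortTriangles {Y : Type*} [MetricSpace X] [PseudoMetricSpace Y] {ι : X → Y}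
    (hι : Isometry ι) (hX : GeodesicSpace X) {ε s₀ : ℝ} (hε : 0 < ε)
    (h : ∀ γ : ℝ → X, IsLipLoop γ → s₀ ≤ loopLength γ → ∃ φ : ℝ × ℝ → Y, ContinuousOn φ D2 ∧
      (∀ s ∈ Set.Icc (0 : ℝ) 1, φ (circlePoint s) = ι (γ s)) ∧
      ∀ w ∈ D2, Metric.infDist (φ w) (ι '' (γ '' Set.Icc 0 1)) ≤
        (1 - ε) * (3 / 32) * loopLength γ) :
    ∃ N, HasShortTriangles X N := by
  obtain ⟨N, hN⟩ := exists_nat_gt (max 16 (max (16 / ε) (16 * (s₀ + 1) / 3)))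
  obtain ⟨hN₁, hN₂, hN₃⟩ : 16 < (N : ℝ) ∧ 16 / ε < N ∧ 16 * (s₀ + 1) / 3 < N := by
    simpa only [max_lt_iff] using hN
  refine ⟨N, fun n hn x p hp => ?_⟩
  have hNn : (N : ℝ) ≤ n := Nat.cast_le.2 hn
  obtain ⟨c, hc, hcp⟩ := exists_lipschitzOnWith_interpolation hX hp
  have hγ := lipschitzOnWith_comp_natCast_mul hc
  have hlen : loopLength (fun s => c (n * s)) ≤ n := by simpa using loopLength_le hγ
  rcases lt_or_ge (loopLength fun s => c (n * s)) s₀ with hs | hs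
  · refine ⟨_, _, _, isShortTriangle_of_forall_dist_le fun i hi j hj => ?_⟩
    have hmem {i : ℕ} (hi : i ≤ n) : (i / n : ℝ) ∈ Set.Icc (0 : ℝ) 1 :=
      ⟨by positivity, div_le_one_of_le₀ (Nat.cast_le.2 hi) n.cast_nonneg⟩
    have hd := dist_le_loopLength hγ (hmem hi) (hmem hj)
    have hn0 : (n : ℝ) ≠ 0 := by linarith
    rw [mul_div_cancel₀ _ hn0, mul_div_cancel₀ _ hn0, hcp i hi, hcp j hj] at hd
    linarith
  · have hloop : IsLipLoop fun s => c (n * s) := ⟨⟨n, hγ⟩, by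
      beta_reduce
      rw [mul_zero, mul_one, hcp n le_rfl, ← Nat.cast_zero, hcp 0 n.zero_le, hp.source, hp.target]⟩
    obtain ⟨φ, hφ, hbd, hnear⟩ := h _ hloop hs
    have hR : (1 - ε) * (3 / 32) * loopLength (fun s => c (n * s)) < 3 / 32 * n - 3 / 2 := by
      rw [div_lt_iff₀ hε] at hN₂
      rcases le_total ε 1 with hε₁ | hε₁
      · linarith [mul_le_mul_of_nonneg_left hlen (sub_nonneg.2 hε₁),
          mul_le_mul_of_nonneg_left hNn hε.le]
      · linarith [mul_nonpos_of_nonpos_of_nonneg (sub_nonpos.2 hε₁)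
          (loopLength_nonneg fun s => c (n * s))]
    rw [Set.image_image] at hnear
    obtain ⟨s, hs, t, ht, u, hu, hstu, hst, htu, hsu⟩ := exists_isBalanced_dist_lt hφ hbd hnear hR
    rw [hι.dist_eq] at hst htu hsu
    have htri := isShortTriangle_floor hc hcp hs ht hu hstu hst.le htu.le hsu.le
    rw [show 2 * (3 / 32 * (n : ℝ) - 3 / 2) + 2 = 3 / 16 * n - 1 by ring] at htri
    exact ⟨_, _, _, htri⟩

end ShortTriangles

section LineIntegrals

/-- The trapezoidal version of the line integral `∫ f dg` along a discrete path of length `n`. For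
a loop it is the area, counted with winding number, enclosed by the image of the loop under
`(f, g)`. -/
noncomputable def lineIntegral {X : Type*} (f g : X → ℝ) (p : ℕ → X) (n : ℕ) : ℝ :=
  ∑ t ∈ Finset.range n, (f (p t) + f (p (t + 1))) / 2 * (g (p (t + 1)) - g (p t))

variable {X : Type*} {f g : X → ℝ} {p q : ℕ → X} {m n i : ℕ}

lemma lineIntegral_congr (h : ∀ i ≤ n, p i = q i) :
    lineIntegral f g p n = lineIntegral f g q n :=
  Finset.sum_congr rfl fun t ht => by
    rw [h t (Finset.mem_range.1 ht).le, h (t + 1) (Finset.mem_range.1 ht)]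

lemma lineIntegral_add (m n : ℕ) : lineIntegral f g p (m + n) =
    lineIntegral f g p m + lineIntegral f g (fun t => p (m + t)) n :=
  Finset.sum_range_add _ m n

lemma lineIntegral_concat (h : p n = q 0) (m : ℕ) :
    lineIntegral f g (concat p n q) (n + m) = lineIntegral f g p n + lineIntegral f g q m := by
  simp only [lineIntegral_add, concat_add h, lineIntegral_congr fun _ => concat_of_le]

lemma lineIntegral_reverse :
    lineIntegral f g (reverse p n) n = -lineIntegral f g p n := by
  rw [lineIntegral, lineIntegral, ← Finset.sum_range_reflect, ← Finset.sum_neg_distrib]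
  refine Finset.sum_congr rfl fun t ht => ?_
  have htn := Finset.mem_range.1 ht
  rw [reverse, reverse, show n - (n - 1 - t) = t + 1 by omega,
    show n - (n - 1 - t + 1) = t by omega]
  ring

lemma lineIntegral_rotate (hp : p n = p 0) (hi : i ≤ n) :
    lineIntegral f g (rotate p n i) n = lineIntegral f g p n := by
  have hjoin : p (i + (n - i)) = p 0 := by rw [Nat.add_sub_cancel' hi, hp]
  calc lineIntegral f g (rotate p n i) n
      = lineIntegral f g (fun t => p (i + t)) (n - i) + lineIntegral f g p i := by
        simpa only [rotate, Nat.sub_add_cancel hi] using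
          lineIntegral_concat (p := fun t => p (i + t)) hjoin i
    _ = lineIntegral f g p n := by
        rw [add_comm, ← lineIntegral_add, Nat.add_sub_cancel' hi]

lemma lineIntegral_eq_add_of_chord {r : ℕ → X} (hr : r m = p i) (hi : i ≤ n) :
    lineIntegral f g p n = lineIntegral f g (concat p i (reverse r m)) (i + m) +
      lineIntegral f g (concat r m fun t => p (i + t)) (m + (n - i)) := by
  have hsplit := lineIntegral_add (f := f) (g := g) (p := p) i (n - i)
  rw [Nat.add_sub_cancel' hi] at hsplit
  have hrev : p i = reverse r m 0 := hr.symm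
  rw [lineIntegral_concat hrev, lineIntegral_concat hr, lineIntegral_reverse]
  linarith

end LineIntegrals

section AreaBounds

/-- A coarse quadratic isoperimetric inequality with constants `κ` and `C`, in which the area of a
loop is measured by the line integrals of `1`-Lipschitz functions. -/
def AreaBound (X : Type*) [PseudoMetricSpace X] (κ C : ℝ) : Prop :=
  ∀ (x : X) (n : ℕ) (p : ℕ → X), IsDiscretePath x x n p → ∀ f g : X → ℝ,
    LipschitzWith 1 f → LipschitzWith 1 g → |lineIntegral f g p n| ≤ κ * n ^ 2 + C

lemma areaBound_one (X : Type*) [PseudoMetricSpace X] : AreaBound X 1 0 := by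
  intro x n p hp f g hf hg
  have hf_dist : ∀ t ≤ n, |f (p t) - f x| ≤ n := fun t ht => by
    calc |f (p t) - f x| ≤ dist (p t) x := by simpa [Real.dist_eq] using hf.dist_le_mul (p t) x
      _ ≤ (t : ℝ) - (0 : ℕ) := by
        rw [dist_comm, ← hp.source]; exact hp.dist_le t.zero_le ht
      _ ≤ n := by simpa using ht
  have hg_dist : ∀ t < n, |g (p (t + 1)) - g (p t)| ≤ 1 := fun t ht => by
    calc |g (p (t + 1)) - g (p t)| ≤ dist (p (t + 1)) (p t) := by
          simpa [Real.dist_eq] using hg.dist_le_mul (p (t + 1)) (p t)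
      _ ≤ 1 := by rw [dist_comm]; exact hp.dist_succ_le t ht
  have hconst : ∑ t ∈ Finset.range n, f x * (g (p (t + 1)) - g (p t)) = 0 := by
    rw [← Finset.mul_sum, Finset.sum_range_sub (fun t => g (p t)), hp.source, hp.target, sub_self,
      mul_zero]
  calc |lineIntegral f g p n|
      = |∑ t ∈ Finset.range n,
          ((f (p t) - f x) / 2 + (f (p (t + 1)) - f x) / 2) * (g (p (t + 1)) - g (p t))| := by
        rw [← sub_zero (lineIntegral f g p n), ← hconst, lineIntegral, ← Finset.sum_sub_distrib]
        congr! 2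
        ring
    _ ≤ ∑ t ∈ Finset.range n,
          |((f (p t) - f x) / 2 + (f (p (t + 1)) - f x) / 2) * (g (p (t + 1)) - g (p t))| :=
        Finset.abs_sum_le_sum_abs _ _
    _ ≤ ∑ t ∈ Finset.range n, (n : ℝ) * 1 := by
        refine Finset.sum_le_sum fun t ht => ?_
        rw [Finset.mem_range] at ht
        rw [abs_mul]
        refine mul_le_mul (abs_le.2 ?_) (hg_dist t ht) (abs_nonneg _) n.cast_nonneg
        have h₀ := abs_le.1 (hf_dist t ht.le)
        have h₁ := abs_le.1 (hf_dist (t + 1) ht)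
        constructor <;> linarith [h₀.1, h₀.2, h₁.1, h₁.2]
    _ = 1 * n ^ 2 + 0 := by simp [sq]

end AreaBounds

section Decay

variable {X : Type*} {x : X} {p : ℕ → X} {n : ℕ}

lemma IsShortTriangle.exists_rotate_dist_le [PseudoMetricSpace X] {D : ℝ} {i j k : ℕ}
    (h : IsShortTriangle p n D i j k) (hp : p n = p 0) :
    ∃ s ≤ n, ∃ a ≤ n, n ≤ 3 * a ∧ 2 * a ≤ n + 2 ∧
      dist (rotate p n s 0) (rotate p n s a) ≤ D := by
  obtain ⟨hij, hjk, hkn, hl, hr, ho, dl, dr, dout⟩ := h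
  have hrot {s t : ℕ} (hst : s ≤ t) (ht : t ≤ n) (hd : dist (p s) (p t) ≤ D) :
      dist (rotate p n s 0) (rotate p n s (t - s)) ≤ D := by
    rwa [rotate_sub hst ht, ← Nat.sub_self s, rotate_sub le_rfl (hst.trans ht)]
  by_cases hleft : n ≤ 3 * (j - i)
  · exact ⟨i, by omega, j - i, by omega, hleft, by omega, hrot hij (by omega) dl⟩
  by_cases hright : n ≤ 3 * (k - j)
  · exact ⟨j, by omega, k - j, by omega, hright, by omega, hrot hjk hkn dr⟩
  · refine ⟨k, hkn, n - k + i, by omega, by omega, by omega, ?_⟩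
    rwa [rotate_sub_add hp hkn, ← Nat.sub_self k, rotate_sub le_rfl hkn, dist_comm]

lemma IsShortTriangle.exists_balanced_chord [PseudoMetricSpace X] {D e : ℝ} {i j k : ℕ}
    (h : IsShortTriangle p n D i j k) (he : 2 ≤ e) (hshort : (j : ℝ) - i ≤ e ∨ (k : ℝ) - j ≤ e) :
    ∃ s t, s ≤ t ∧ t ≤ n ∧ |(n : ℝ) - 2 * (t - s)| ≤ e ∧ dist (p s) (p t) ≤ D := by
  obtain ⟨hij, hjk, hkn, hl, hr, ho, dl, dr, dout⟩ := h
  have hl' : (2 : ℝ) * j ≤ 2 * i + n + 2 := mod_cast hl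
  have hr' : (2 : ℝ) * k ≤ 2 * j + n + 2 := mod_cast hr
  have ho' : (2 : ℝ) * i + n ≤ 2 * k + 2 := mod_cast ho
  rcases hshort with hshort | hshort
  · rcases le_total ((k : ℝ) - j) (n - (k - i)) with hc | hc
    · exact ⟨i, k, by omega, hkn, abs_le.2 ⟨by linarith, by linarith⟩, dout⟩
    · exact ⟨j, k, hjk, hkn, abs_le.2 ⟨by linarith, by linarith⟩, dr⟩
  · rcases le_total ((j : ℝ) - i) (n - (k - i)) with hc | hc
    · exact ⟨i, k, by omega, hkn, abs_le.2 ⟨by linarith, by linarith⟩, dout⟩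
    · exact ⟨i, j, hij, by omega, abs_le.2 ⟨by linarith, by linarith⟩, dl⟩

variable [MetricSpace X] {f g : X → ℝ} {κ C : ℝ}

lemma AreaBound.abs_lineIntegral_le_of_chord (hB : AreaBound X κ C)
    (hp : IsDiscretePath x x n p) (hf : LipschitzWith 1 f) (hg : LipschitzWith 1 g) {a m : ℕ}
    {r : ℕ → X} (ha : a ≤ n) (hr : IsDiscretePath x (p a) m r) :
    |lineIntegral f g p n| ≤
      |lineIntegral f g (concat p a (reverse r m)) (a + m)| + (κ * (n - a + m) ^ 2 + C) := by
  have hrest : IsDiscretePath x x (m + (n - a)) (concat r m fun t => p (a + t)) :=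
    hr.concat (hp.target ▸ hp.segment ha le_rfl)
  rw [lineIntegral_eq_add_of_chord hr.target ha]
  refine (abs_add_le _ _).trans (add_le_add_right ?_ _)
  have h := hB _ _ _ hrest f g hf hg
  rw [Nat.cast_add, Nat.cast_sub ha] at h
  rwa [add_comm ((n : ℝ) - a)]

lemma IsDiscretePath.concat_reverse_chord (hp : IsDiscretePath x x n p) {a m : ℕ} {r : ℕ → X}
    (ha : a ≤ n) (hr : IsDiscretePath x (p a) m r) :
    IsDiscretePath x x (a + m) (SharpIsop.concat p a (SharpIsop.reverse r m)) := by
  have h := hp.segment a.zero_le ha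
  simp only [hp.source, Nat.sub_zero, zero_add] at h
  exact h.concat hr.reverse

lemma AreaBound.abs_lineIntegral_le_of_dist_le (hB : AreaBound X κ C) (hX : GeodesicSpace X)
    (hκ : 0 ≤ κ) (hp : IsDiscretePath x x n p) (hf : LipschitzWith 1 f) (hg : LipschitzWith 1 g)
    {s t : ℕ} (hst : s ≤ t) (ht : t ≤ n) {M : ℝ} (hM : dist (p s) (p t) ≤ M - 1) :
    |lineIntegral f g p n| ≤ κ * ((t - s + M) ^ 2 + (n - (t - s) + M) ^ 2) + 2 * C := by
  wlog hs : s = 0 generalizing p x s t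
  · have hloop : p n = p 0 := hp.target.trans hp.source.symm
    have h := this (s := 0) (t := t - s) (hp.rotate (hst.trans ht)) (Nat.zero_le _) (by omega)
      (by rwa [rotate_sub hst ht, ← Nat.sub_self s, rotate_sub le_rfl (hst.trans ht)]) rfl
    rwa [lineIntegral_rotate hloop (hst.trans ht), Nat.cast_sub hst, Nat.cast_zero, sub_zero] at h
  subst hs
  obtain ⟨m, r, hr, hm, -⟩ := exists_chord hX (p 0) (p t)
  rw [hp.source] at hr
  have hcut := hB.abs_lineIntegral_le_of_chord hp hf hg ht hr
  have hsmall := hB _ _ _ (hp.concat_reverse_chord ht hr) f g hf hg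
  have hmM : (m : ℝ) ≤ M := by linarith
  have htn : (t : ℝ) ≤ n := Nat.cast_le.2 ht
  have h₁ : (t + m : ℝ) ^ 2 ≤ (t + M) ^ 2 := by gcongr
  have h₂ : (n - t + m : ℝ) ^ 2 ≤ (n - t + M) ^ 2 := by
    have := sub_nonneg.2 htn
    gcongr
  push_cast at hsmall
  simp only [Nat.cast_zero, sub_zero]
  linarith [mul_le_mul_of_nonneg_left h₁ hκ, mul_le_mul_of_nonneg_left h₂ hκ]

lemma AreaBound.abs_lineIntegral_le_of_balanced_chord (hB : AreaBound X κ C)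
    (hX : GeodesicSpace X) (hκ : 0 ≤ κ) (hp : IsDiscretePath x x n p) (hf : LipschitzWith 1 f)
    (hg : LipschitzWith 1 g) {s t : ℕ} (hst : s ≤ t) (ht : t ≤ n) {M e : ℝ}
    (hM : dist (p s) (p t) ≤ M - 1) (he : |(n : ℝ) - 2 * (t - s)| ≤ e) :
    |lineIntegral f g p n| ≤ κ * (((n + 2 * M) ^ 2 + e ^ 2) / 2) + 2 * C := by
  refine (hB.abs_lineIntegral_le_of_dist_le hX hκ hp hf hg hst ht hM).trans ?_
  have hsq : ((n : ℝ) - 2 * (t - s)) ^ 2 ≤ e ^ 2 := sq_le_sq.2 (he.trans (le_abs_self e))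
  gcongr
  linarith

lemma IsShortTriangle.chord_or_short_arc {a m i j k : ℕ} {r : ℕ → X} {D e : ℝ}
    (h : IsShortTriangle (concat p a (reverse r m)) (a + m) D i j k) (hr : r m = p a)
    (hgeod : ∀ s, ∀ t ≤ m, (t : ℝ) - s ≤ dist (r s) (r t) + 1) (he : D + 1 ≤ e) :
    (j ≤ a ∧ e ≤ (j : ℝ) - i ∧ dist (p i) (p j) ≤ D) ∨ ((j : ℝ) - i ≤ e ∨ (k : ℝ) - j ≤ e) := by
  rcases le_total j a with hja | haj
  · rcases le_total e ((j : ℝ) - i) with hlong | hshort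
    · refine Or.inl ⟨hja, hlong, ?_⟩
      simpa only [concat_of_le hja, concat_of_le (h.left_le.trans hja)] using h.dist_left
    · exact Or.inr (Or.inl hshort)
  · refine Or.inr (Or.inr ?_)
    obtain ⟨j', rfl⟩ := Nat.exists_eq_add_of_le haj
    obtain ⟨k', rfl⟩ := Nat.exists_eq_add_of_le (haj.trans h.le_right)
    have hjk := h.le_right
    have hkm := h.right_le
    have hdist := h.dist_right
    have hrev : p a = reverse r m 0 := hr.symm
    rw [concat_add hrev, concat_add hrev, dist_comm] at hdist
    have hlen := hgeod (m - k') (m - j') (by omega)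
    rw [Nat.cast_sub (by omega), Nat.cast_sub (by omega)] at hlen
    push_cast
    change dist (r (m - k')) (r (m - j')) ≤ D at hdist
    linarith

-- A chord of length `3n/16` cutting a loop of length `n` in the ratio `1 : 2` would give the factor
-- `(1/3 + 3/16)² + (2/3 + 3/16)² = 2306/2304`, just above one. If the cut is not more balanced than
-- that, the constants `a` and `M` are nearly critical and the shorter piece has to be cut again.
lemma critical_of_lt_cut {n a M : ℝ} (hn : 10 ^ 6 ≤ n) (h₁ : n ≤ 3 * a) (h₂ : 2 * a ≤ n + 2)
    (hM₀ : 0 ≤ M) (hM : M ≤ 3 / 16 * n)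
    (h : 9999 / 10000 * n ^ 2 < (a + M) ^ 2 + (n - a + M) ^ 2) :
    a ≤ 0.335 * n ∧ 0.187 * n + 1 ≤ M := by
  have hMn : (n + 2 * M) ^ 2 ≤ (11 / 8 * n) ^ 2 := by gcongr; linarith
  constructor
  · by_contra! hc
    have ha : (n - 2 * a) ^ 2 ≤ (0.33 * n) ^ 2 := sq_le_sq' (by linarith) (by linarith)
    nlinarith
  · by_contra! hc
    have hMn : (n + 2 * M) ^ 2 ≤ (1.37402 * n) ^ 2 := by gcongr; linarith
    have ha : (n - 2 * a) ^ 2 ≤ (n / 3) ^ 2 := sq_le_sq' (by linarith) (by linarith)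
    nlinarith

lemma cut_le_of_short_chord {n e M : ℝ} (hM₀ : 0 ≤ M) (hM : M ≤ 0.098 * n)
    (he₁ : 0.1232 * n ≤ e) (he₂ : e ≤ 0.8768 * n) :
    (e + M) ^ 2 + (n - e + M) ^ 2 ≤ 9999 / 10000 * n ^ 2 := by
  have hMn : (n + 2 * M) ^ 2 ≤ (1.196 * n) ^ 2 := by gcongr <;> linarith
  have he : (n - 2 * e) ^ 2 ≤ (0.7536 * n) ^ 2 := sq_le_sq' (by linarith) (by linarith)
  nlinarith

lemma cut_add_cut_le {n L b : ℝ} (hL₀ : 0 ≤ L) (hL : L ≤ 0.5225 * n) (hb₀ : 0 ≤ b)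
    (hb : b ≤ 0.85417 * n) :
    ((L + 2 * (3 / 16 * L)) ^ 2 + (0.1232 * n) ^ 2) / 2 + b ^ 2 ≤ 9999 / 10000 * n ^ 2 := by
  have hL' : L ^ 2 ≤ (0.5225 * n) ^ 2 := by gcongr
  have hb' : b ^ 2 ≤ (0.85417 * n) ^ 2 := by gcongr
  nlinarith

lemma AreaBound.abs_lineIntegral_le_of_critical_chord (hB : AreaBound X κ C)
    (hX : GeodesicSpace X) (hκ : 0 ≤ κ) (hC : 0 ≤ C) {N : ℕ} (hN : HasShortTriangles X N)
    (hn : 2 * N + 10 ^ 6 ≤ n) (hp : IsDiscretePath x x n p) (hf : LipschitzWith 1 f)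
    (hg : LipschitzWith 1 g) {a : ℕ} (ha : a ≤ n) (ha₁ : n ≤ 3 * a) (ha₂ : (a : ℝ) ≤ 0.335 * n)
    (hd₁ : 0.187 * n ≤ dist (p 0) (p a)) (hd₂ : dist (p 0) (p a) ≤ 3 / 16 * n - 1) :
    |lineIntegral f g p n| ≤ κ * (9999 / 10000 * n ^ 2) + 3 * C := by
  have hn' : (10 ^ 6 : ℝ) ≤ n := mod_cast (by omega : 10 ^ 6 ≤ n)
  have ha₁' : (n : ℝ) ≤ 3 * a := mod_cast ha₁
  obtain ⟨m, r, hr, hm, hgeod⟩ := exists_chord hX (p 0) (p a)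
  have hdm : dist (p 0) (p a) ≤ m := by
    simpa [hr.source, hr.target] using hr.dist_le m.zero_le le_rfl
  rw [hp.source] at hr
  have hq := hp.concat_reverse_chord ha hr
  have hNL : N ≤ a + m := by
    have : (n : ℝ) ≤ 2 * (a + m : ℕ) := by push_cast; linarith
    have : n ≤ 2 * (a + m) := mod_cast this
    omega
  obtain ⟨i, j, k, h⟩ := hN _ hNL _ _ hq
  have hL : ((a + m : ℕ) : ℝ) ≤ 0.5225 * n := by push_cast; linarith
  rcases h.chord_or_short_arc (e := 0.1232 * n) hr.target hgeod (by linarith) with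
    ⟨hja, hlong, hdist⟩ | hshort
  · refine (hB.abs_lineIntegral_le_of_dist_le hX hκ hp hf hg h.left_le (hja.trans ha)
      hdist).trans ?_
    have hj : (j : ℝ) ≤ a := Nat.cast_le.2 hja
    gcongr
    · exact cut_le_of_short_chord (by positivity) (by linarith) hlong (by linarith)
    · norm_num
  · obtain ⟨s, t, hst, ht, hbal, hdist⟩ := h.exists_balanced_chord (by linarith) hshort
    have hcut := hB.abs_lineIntegral_le_of_chord hp hf hg ha hr
    have hbalcut := hB.abs_lineIntegral_le_of_balanced_chord hX hκ hq hf hg hst ht hdist hbal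
    have han : (a : ℝ) ≤ n := Nat.cast_le.2 ha
    have hquad := mul_le_mul_of_nonneg_left (cut_add_cut_le (n := n) (Nat.cast_nonneg (a + m)) hL
      (add_nonneg (sub_nonneg.2 han) m.cast_nonneg) (by linarith)) hκ
    linarith

lemma AreaBound.abs_lineIntegral_le_of_hasShortTriangles (hB : AreaBound X κ C)
    (hX : GeodesicSpace X) (hκ : 0 ≤ κ) (hC : 0 ≤ C) {N : ℕ} (hN : HasShortTriangles X N)
    (hn : 2 * N + 10 ^ 6 ≤ n) (hp : IsDiscretePath x x n p) (hf : LipschitzWith 1 f)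
    (hg : LipschitzWith 1 g) :
    |lineIntegral f g p n| ≤ κ * (9999 / 10000 * n ^ 2) + 3 * C := by
  have hloop : p n = p 0 := hp.target.trans hp.source.symm
  obtain ⟨i, j, k, h⟩ := hN n (by omega) x p hp
  obtain ⟨s, hs, a, ha, ha₁, ha₂, hd⟩ := h.exists_rotate_dist_le hloop
  rw [← lineIntegral_rotate hloop hs]
  have hq := hp.rotate hs
  set q := rotate p n s
  set M := dist (q 0) (q a) + 1
  rcases le_or_gt ((a + M) ^ 2 + (n - a + M) ^ 2) (9999 / 10000 * (n : ℝ) ^ 2) with hcut | hcut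
  · have hle := hB.abs_lineIntegral_le_of_dist_le hX hκ hq hf hg a.zero_le ha
      (M := M) (by simp [M])
    simp only [Nat.cast_zero, sub_zero] at hle
    linarith [mul_le_mul_of_nonneg_left hcut hκ]
  · obtain ⟨ha₃, hM⟩ := critical_of_lt_cut (mod_cast (by omega : 10 ^ 6 ≤ n)) (mod_cast ha₁)
      (mod_cast ha₂) (by positivity) (by linarith) hcut
    exact hB.abs_lineIntegral_le_of_critical_chord hX hκ hC hN hn hq hf hg ha ha₁ ha₃
      (by linarith) hd

theorem HasShortTriangles.exists_areaBound {N : ℕ} (hN : HasShortTriangles X N)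
    (hX : GeodesicSpace X) (hκ : 0 < κ) : ∃ C, 0 ≤ C ∧ AreaBound X κ C := by
  have hpow : ∀ k : ℕ, ∃ C, 0 ≤ C ∧ AreaBound X ((9999 / 10000) ^ k) C := by
    intro k
    induction k with
    | zero => exact ⟨0, le_rfl, by simpa using areaBound_one X⟩
    | succ k ih =>
      obtain ⟨C, hC, hB⟩ := ih
      refine ⟨3 * C + ((2 * N + 10 ^ 6 : ℕ) : ℝ) ^ 2, by positivity, fun x n p hp f g hf hg => ?_⟩
      rcases le_or_gt (2 * N + 10 ^ 6) n with hn | hn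
      · have hdecay := hB.abs_lineIntegral_le_of_hasShortTriangles hX (by positivity) hC hN hn hp
          hf hg
        rw [pow_succ, mul_assoc, ← add_assoc]
        exact hdecay.trans (le_add_of_nonneg_right (sq_nonneg _))
      · calc |lineIntegral f g p n| ≤ 1 * n ^ 2 + 0 := areaBound_one X x n p hp f g hf hg
          _ ≤ ((2 * N + 10 ^ 6 : ℕ) : ℝ) ^ 2 := by
            rw [one_mul, add_zero]; gcongr
          _ ≤ _ := by
            rw [← add_assoc]; exact le_add_of_nonneg_left (by positivity)
  obtain ⟨k, hk⟩ := exists_pow_lt_of_lt_one hκ (show (9999 / 10000 : ℝ) < 1 by norm_num)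
  obtain ⟨C, hC, hB⟩ := hpow k
  refine ⟨C, hC, fun x n p hp f g hf hg => (hB x n p hp f g hf hg).trans ?_⟩
  gcongr

end Decay

section ChainJoined

/-- The points `x` and `y` are joined by a discrete path in `S` of length at most `L`. -/
def ChainJoined {X : Type*} [PseudoMetricSpace X] (S : Set X) (L : ℝ) (x y : X) : Prop :=
  ∃ (n : ℕ) (r : ℕ → X), (n : ℝ) ≤ L ∧ IsDiscretePath x y n r ∧ ∀ t ≤ n, r t ∈ S

variable {X : Type*} [PseudoMetricSpace X] {S : Set X} {x y z : X} {L L' : ℝ}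

namespace ChainJoined

lemma mono (h : ChainJoined S L x y) (hL : L ≤ L') : ChainJoined S L' x y :=
  let ⟨n, r, hn, hr, hS⟩ := h
  ⟨n, r, hn.trans hL, hr, hS⟩

lemma refl (hx : x ∈ S) (hL : 0 ≤ L) : ChainJoined S L x x :=
  ⟨0, fun _ => x, by simpa using hL, ⟨rfl, rfl, by simp⟩, fun _ _ => hx⟩

lemma symm (h : ChainJoined S L x y) : ChainJoined S L y x :=
  let ⟨n, r, hn, hr, hS⟩ := h
  ⟨n, reverse r n, hn, hr.reverse, fun t _ => hS (n - t) (n.sub_le t)⟩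

lemma trans (h : ChainJoined S L x y) (h' : ChainJoined S L' y z) :
    ChainJoined S (L + L') x z := by
  obtain ⟨n, r, hn, hr, hrS⟩ := h
  obtain ⟨m, q, hm, hq, hqS⟩ := h'
  refine ⟨n + m, concat r n q, by push_cast; linarith, hr.concat hq, fun t ht => ?_⟩
  rcases le_total t n with htn | htn
  · rw [concat_of_le htn]
    exact hrS t htn
  · obtain ⟨s, rfl⟩ := Nat.exists_eq_add_of_le htn
    rw [concat_add (hr.target.trans hq.source.symm)]
    exact hqS s (by omega)

end ChainJoined

lemma chainJoined_of_lipschitzOnWith {c : ℝ → X} {s t : ℝ}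
    (hc : LipschitzOnWith 1 c (Set.uIcc s t)) (hS : ∀ u ∈ Set.uIcc s t, c u ∈ S) :
    ChainJoined S (|s - t| + 1) (c s) (c t) := by
  wlog hst : s ≤ t generalizing s t
  · rw [Set.uIcc_comm] at hc hS
    rw [abs_sub_comm]
    exact (this hc hS (le_of_not_ge hst)).symm
  rw [Set.uIcc_of_le hst] at hc hS
  refine ⟨_, _, ?_, isDiscretePath_sample hst hc, fun i _ => hS _
    ⟨le_min hst (le_add_of_nonneg_right i.cast_nonneg), min_le_left _ _⟩⟩
  rw [abs_sub_comm, abs_of_nonneg (sub_nonneg.2 hst)]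
  exact (Nat.ceil_lt_add_one (sub_nonneg.2 hst)).le

lemma chainJoined_of_two_mul_le_dist {X : Type*} [MetricSpace X] (hX : GeodesicSpace X)
    {p x y : X} {D : ℝ} (hxy : dist x y ≤ D) (hx : 2 * D ≤ dist p x) :
    ChainJoined {w | D ≤ dist p w} (D + 1) x y := by
  obtain ⟨g, hg⟩ := hX x y
  rw [← hg.1, ← hg.2.1]
  have hlip := hg.lipschitzOnWith
  rw [← Set.uIcc_of_le dist_nonneg] at hlip
  refine (chainJoined_of_lipschitzOnWith hlip fun u hu => ?_).mono (by simpa using hxy)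
  rw [Set.uIcc_of_le dist_nonneg] at hu
  have hdist : dist x (g u) = u := by
    rw [← hg.1, hg.2.2 0 ⟨le_rfl, dist_nonneg⟩ u hu, zero_sub, abs_neg, abs_of_nonneg hu.1]
  change D ≤ dist p (g u)
  linarith [hu.2, dist_triangle_right p x (g u)]

end ChainJoined

section GeodesicDetours

variable {X : Type*}

lemma IsGeodesicSeg.dist_eq_sub [MetricSpace X] {x y : X} {g : ℝ → X} (hg : IsGeodesicSeg x y g)
    {s t : ℝ} (hs : 0 ≤ s) (hst : s ≤ t) (ht : t ≤ dist x y) : dist (g s) (g t) = t - s := by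
  rw [hg.2.2 s ⟨hs, hst.trans ht⟩ t ⟨hs.trans hst, ht⟩, abs_sub_comm,
    abs_of_nonneg (sub_nonneg.2 hst)]

lemma IsGeodesicSeg.segment [MetricSpace X] {x y : X} {g : ℝ → X} (hg : IsGeodesicSeg x y g)
    {s t : ℝ} (hs : 0 ≤ s) (hst : s ≤ t) (ht : t ≤ dist x y) :
    IsGeodesicSeg (g s) (g t) fun u => g (s + u) := by
  refine ⟨by simp, ?_, fun u hu v hv => ?_⟩
  · simp only [hg.dist_eq_sub hs hst ht, add_sub_cancel]
  · rw [hg.dist_eq_sub hs hst ht] at hu hv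
    rw [hg.2.2 _ ⟨by linarith [hu.1], by linarith [hu.2]⟩ _
      ⟨by linarith [hv.1], by linarith [hv.2]⟩, add_sub_add_left_eq_sub]

variable {f g : X → ℝ} {p : ℕ → X} {n : ℕ}

lemma lineIntegral_eq_zero (hf : ∀ t ≤ n, f (p t) = 0) : lineIntegral f g p n = 0 :=
  Finset.sum_eq_zero fun t ht => by
    rw [hf t (Finset.mem_range.1 ht).le, hf (t + 1) (Finset.mem_range.1 ht)]
    simp

lemma mul_sub_le_lineIntegral {c : ℝ} (hg : ∀ t < n, g (p t) ≤ g (p (t + 1)))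
    (hf : ∀ t < n, g (p t) < g (p (t + 1)) → c ≤ f (p t) ∧ c ≤ f (p (t + 1))) :
    c * (g (p n) - g (p 0)) ≤ lineIntegral f g p n := by
  rw [← Finset.sum_range_sub (fun t => g (p t)), Finset.mul_sum]
  refine Finset.sum_le_sum fun t ht => ?_
  rw [Finset.mem_range] at ht
  rcases (hg t ht).eq_or_lt with heq | hlt
  · simp [heq]
  · obtain ⟨h₀, h₁⟩ := hf t ht hlt
    exact mul_le_mul_of_nonneg_right (by linarith) (sub_nonneg.2 hlt.le)

lemma lt_and_lt_of_max_min_lt_max_min {α : Type*} [LinearOrder α] {a b s t : α}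
    (h : max a (min b s) < max a (min b t)) : a < t ∧ s < b := by
  constructor <;> by_contra! hle
  · exact h.not_ge (max_le (le_max_left _ _) ((min_le_of_right_le hle).trans (le_max_left _ _)))
  · rw [min_eq_left hle] at h
    exact h.not_ge (max_le_max le_rfl (min_le_left _ _))

lemma mul_le_lineIntegral_geodesic [MetricSpace X] {x y : X} {G : ℝ → X}
    (hG : IsGeodesicSeg x y G) {D u : ℝ} (hD : 0 ≤ D) (hu : D ≤ u) (hu' : u + D ≤ dist x y) :
    (D / 2 - 1) * D ≤ lineIntegral (fun w => max 0 (D - dist (G u) w))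
      (fun w => max (u - D / 2) (min (u + D / 2) (dist x w)))
      (fun t => G (min (dist x y) t)) ⌈dist x y⌉₊ := by
  have hmem (t : ℕ) : min (dist x y) t ∈ Set.Icc 0 (dist x y) :=
    ⟨le_min dist_nonneg t.cast_nonneg, min_le_left _ _⟩
  have hmono (t : ℕ) : min (dist x y) (t : ℝ) ≤ min (dist x y) (t + 1 : ℕ) :=
    min_le_min le_rfl (by simp)
  have hstep (t : ℕ) : min (dist x y) (t + 1 : ℕ) ≤ min (dist x y) (t : ℝ) + 1 := by
    rw [← min_add_add_right]
    exact min_le_min (by linarith) (by simp)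
  set p : ℕ → X := fun t => G (min (dist x y) t) with hp
  set bump : X → ℝ := fun w => max 0 (D - dist (G u) w)
  set ramp : X → ℝ := fun w => max (u - D / 2) (min (u + D / 2) (dist x w)) with hramp
  have bump_ge (t : ℕ) (h : |u - min (dist x y) t| ≤ D / 2 + 1) : D / 2 - 1 ≤ bump (p t) := by
    change D / 2 - 1 ≤ max 0 (D - dist (G u) (G (min (dist x y) t)))
    rw [hG.2.2 u ⟨by linarith, by linarith⟩ _ (hmem t)]
    exact le_max_of_le_right (by linarith)
  have ramp_eq (t : ℕ) : ramp (p t) = max (u - D / 2) (min (u + D / 2) (min (dist x y) t)) := by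
    simpa [hp, hramp, hG.1] using congrArg (fun d => max (u - D / 2) (min (u + D / 2) d))
      (hG.dist_eq_sub le_rfl (hmem t).1 (hmem t).2)
  have ramp_start : ramp (p 0) = u - D / 2 := by
    rw [ramp_eq, Nat.cast_zero, min_eq_right dist_nonneg, min_eq_right (by linarith),
      max_eq_left (by linarith)]
  have ramp_end : ramp (p ⌈dist x y⌉₊) = u + D / 2 := by
    rw [ramp_eq, min_eq_left (Nat.le_ceil _), min_eq_left (by linarith),
      max_eq_right (by linarith)]
  calc (D / 2 - 1) * D = (D / 2 - 1) * (ramp (p ⌈dist x y⌉₊) - ramp (p 0)) := by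
        rw [ramp_start, ramp_end]; ring
    _ ≤ lineIntegral bump ramp p ⌈dist x y⌉₊ :=
        mul_sub_le_lineIntegral (fun t _ => ?_) fun t _ hlt => ?_
  · rw [ramp_eq, ramp_eq]
    exact max_le_max le_rfl (min_le_min le_rfl (hmono t))
  · rw [ramp_eq, ramp_eq] at hlt
    obtain ⟨hlow, hupp⟩ := lt_and_lt_of_max_min_lt_max_min hlt
    constructor <;> refine bump_ge _ (abs_le.2 ⟨?_, ?_⟩) <;> linarith [hmono t, hstep t]

lemma AreaBound.le_of_chainJoined [MetricSpace X] {C : ℝ} (hC : 0 ≤ C)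
    (hB : AreaBound X (1 / 2500) C) {x y : X} {G : ℝ → X} (hG : IsGeodesicSeg x y G) {D u : ℝ}
    (hu : D ≤ u) (hu' : u + D ≤ dist x y) (hxy : dist x y ≤ 4 * D)
    (hjoin : ChainJoined {w | D ≤ dist (G u) w} (20 * D + 3) y x) : D ≤ C + 8 := by
  by_contra! hD
  obtain ⟨n, q, hn, hq, hqD⟩ := hjoin
  have hm : (⌈dist x y⌉₊ : ℝ) < dist x y + 1 := Nat.ceil_lt_add_one dist_nonneg
  have hp : IsDiscretePath x y ⌈dist x y⌉₊ fun t => G (min (dist x y) t) := by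
    simpa [hG.1, hG.2.1] using isDiscretePath_sample dist_nonneg hG.lipschitzOnWith
  have hf : LipschitzWith 1 fun w => max 0 (D - dist (G u) w) := by
    simpa using ((LipschitzWith.const D).sub (LipschitzWith.dist_right (G u))).const_max 0
  have hg : LipschitzWith 1 fun w => max (u - D / 2) (min (u + D / 2) (dist x w)) :=
    ((LipschitzWith.dist_right x).const_min _).const_max _
  have harea := (le_abs_self _).trans (hB x _ _ (hp.concat hq) _ _ hf hg)
  have hfar : ∀ t ≤ n, max 0 (D - dist (G u) (q t)) = 0 := fun t ht =>
    max_eq_left (sub_nonpos.2 (hqD t ht))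
  rw [lineIntegral_concat (hp.target.trans hq.source.symm),
    lineIntegral_eq_zero (f := fun w => max 0 (D - dist (G u) w)) hfar, add_zero] at harea
  have hlower := mul_le_lineIntegral_geodesic hG (by linarith) hu hu'
  have hlength : ((⌈dist x y⌉₊ + n : ℕ) : ℝ) ^ 2 ≤ (25 * D) ^ 2 := by
    gcongr
    push_cast
    linarith
  nlinarith

end GeodesicDetours

section QuasiGeodesics

/-- The curve `c` on `[0, l]` is a `1`-Lipschitz `(3, 0)`-quasi-geodesic from `x` to `z`. The
constant `3` is the one for which going to a nearest point of a geodesic and then along the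
geodesic gives such a curve. -/
structure IsQuasiGeodesicSeg {X : Type*} [PseudoMetricSpace X] (x z : X) (l : ℝ) (c : ℝ → X) :
    Prop where
  nonneg : 0 ≤ l
  source : c 0 = x
  target : c l = z
  lipschitzOnWith : LipschitzOnWith 1 c (Set.Icc 0 l)
  abs_sub_le : ∀ s ∈ Set.Icc 0 l, ∀ t ∈ Set.Icc 0 l, |s - t| ≤ 3 * dist (c s) (c t)

variable {X : Type*} [MetricSpace X] {x y z : X} {c g G : ℝ → X} {C D l : ℝ}

lemma exists_chainJoined_of_le_dist (hX : GeodesicSpace X) (hG : IsGeodesicSeg x z G)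
    {K : Set X} (hxK : x ∈ K) (hD : 0 ≤ D)
    (hnear : ∀ s ∈ Set.Icc 0 (dist x z), ∃ k ∈ K, dist (G s) k ≤ D) {u : ℝ}
    (hu : u ∈ Set.Icc 0 (dist x z)) (hfar : ∀ k ∈ K, D ≤ dist (G u) k) :
    ∃ a ∈ Set.Icc 0 (dist x z), a + D ≤ u ∧ u ≤ a + 2 * D ∧ ∃ k ∈ K, dist (G a) k ≤ D ∧
      ChainJoined {w | D ≤ dist (G u) w} (D + 1) (G a) k := by
  rcases le_total (2 * D) u with h | h
  · have ha : u - 2 * D ∈ Set.Icc 0 (dist x z) := ⟨by linarith, by linarith [hu.2]⟩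
    obtain ⟨k, hk, hdist⟩ := hnear _ ha
    refine ⟨u - 2 * D, ha, by linarith, by linarith, k, hk, hdist,
      chainJoined_of_two_mul_le_dist hX hdist ?_⟩
    rw [dist_comm, hG.dist_eq_sub ha.1 (by linarith) hu.2]
    linarith
  · have hxu : D ≤ dist (G u) x := hfar x hxK
    have hdist : dist (G u) x = u := by
      rw [dist_comm]
      simpa [hG.1] using hG.dist_eq_sub le_rfl hu.1 hu.2
    refine ⟨0, ⟨le_rfl, dist_nonneg⟩, by linarith, by linarith, x, hxK, ?_, ?_⟩
    · simpa [hG.1] using hD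
    · rw [hG.1]
      exact ChainJoined.refl hxu (by linarith)

lemma IsQuasiGeodesicSeg.le_of_forall_le_dist (hX : GeodesicSpace X) (hC : 0 ≤ C)
    (hB : AreaBound X (1 / 2500) C) (hG : IsGeodesicSeg x z G) (hc : IsQuasiGeodesicSeg x z l c)
    (hD : 0 ≤ D)
    (hnear : ∀ s ∈ Set.Icc 0 (dist x z), ∃ k ∈ c '' Set.Icc 0 l, dist (G s) k ≤ D) {u : ℝ}
    (hu : u ∈ Set.Icc 0 (dist x z)) (hfar : ∀ k ∈ c '' Set.Icc 0 l, D ≤ dist (G u) k) :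
    D ≤ C + 8 := by
  have hzx : dist z x = dist x z := dist_comm z x
  obtain ⟨a, ha, hau, hua, _, ⟨t, ht, rfl⟩, hat, hjoin_a⟩ := exists_chainJoined_of_le_dist
    (K := c '' Set.Icc 0 l) hX hG ⟨0, ⟨le_rfl, hc.nonneg⟩, hc.source⟩ hD hnear hu hfar
  obtain ⟨b, hb, hbu, hub, _, ⟨t', ht', rfl⟩, hbt, hjoin_b⟩ :=
    exists_chainJoined_of_le_dist (K := c '' Set.Icc 0 l) (u := dist x z - u) hX hG.reverse
      ⟨l, ⟨hc.nonneg, le_rfl⟩, hc.target⟩ hD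
      (fun s hs => hnear _ ⟨by linarith [hs.2], by linarith [hs.1]⟩)
      ⟨by linarith [hu.2], by linarith [hu.1]⟩ (by simpa using hfar)
  simp only [sub_sub_cancel] at hjoin_b
  have hab : dist (G a) (G (dist x z - b)) = dist x z - b - a :=
    hG.dist_eq_sub ha.1 (by linarith) (by linarith [hb.1])
  have htt : |t' - t| ≤ 18 * D := by
    have h₁ := hc.abs_sub_le t' ht' t ht
    have h₂ := dist_triangle4 (c t') (G (dist x z - b)) (G a) (c t)
    rw [dist_comm (c t') (G _), dist_comm (G (_ - b)) (G a), hab] at h₂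
    linarith
  have hsub : Set.uIcc t' t ⊆ Set.Icc 0 l := Set.uIcc_subset_Icc ht' ht
  have hjoin_c : ChainJoined {w | D ≤ dist (G u) w} (|t' - t| + 1) (c t') (c t) :=
    chainJoined_of_lipschitzOnWith (hc.lipschitzOnWith.mono hsub) fun v hv =>
      hfar _ ⟨v, hsub hv, rfl⟩
  have hjoin := (hjoin_b.trans (hjoin_c.trans hjoin_a.symm)).mono
    (show _ ≤ 20 * D + 3 by linarith)
  have hseg : IsGeodesicSeg (G a) (G (dist x z - b)) fun v => G (a + v) :=
    hG.segment ha.1 (by linarith) (by linarith [hb.1])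
  refine hB.le_of_chainJoined hC hseg (u := u - a) (by linarith) ?_ ?_ (by simpa using hjoin) <;>
    rw [hab] <;> linarith

theorem IsQuasiGeodesicSeg.infDist_geodesic_le (hX : GeodesicSpace X) (hC : 0 ≤ C)
    (hB : AreaBound X (1 / 2500) C) (hG : IsGeodesicSeg x z G) (hc : IsQuasiGeodesicSeg x z l c)
    {s : ℝ} (hs : s ∈ Set.Icc 0 (dist x z)) :
    Metric.infDist (G s) (c '' Set.Icc 0 l) ≤ C + 8 := by
  have hK : IsCompact (c '' Set.Icc 0 l) :=
    isCompact_Icc.image_of_continuousOn hc.lipschitzOnWith.continuousOn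
  have hne : (c '' Set.Icc 0 l).Nonempty := ⟨c 0, 0, ⟨le_rfl, hc.nonneg⟩, rfl⟩
  obtain ⟨u, hu, hmax⟩ := isCompact_Icc.exists_isMaxOn ⟨s, hs⟩
    ((Metric.continuous_infDist_pt (c '' Set.Icc 0 l)).comp_continuousOn
      hG.lipschitzOnWith.continuousOn)
  refine (hmax hs).trans (hc.le_of_forall_le_dist hX hC hB hG Metric.infDist_nonneg
    (fun s hs => ?_) hu fun k hk => Metric.infDist_le_dist_of_mem hk)
  obtain ⟨k, hk, hdist⟩ := hK.exists_infDist_eq_dist hne (G s)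
  exact ⟨k, hk, hdist ▸ hmax hs⟩

lemma exists_infDist_eq_infDist (hG : IsGeodesicSeg x z G) {A B : Set X} (hx : x ∈ A)
    (hz : z ∈ B) :
    ∃ s ∈ Set.Icc 0 (dist x z), Metric.infDist (G s) A = Metric.infDist (G s) B := by
  have hcont (S : Set X) : ContinuousOn (fun s => Metric.infDist (G s) S)
      (Set.Icc 0 (dist x z)) :=
    (Metric.continuous_infDist_pt S).comp_continuousOn hG.lipschitzOnWith.continuousOn
  refine isPreconnected_Icc.intermediate_value₂ ⟨le_rfl, dist_nonneg⟩ ⟨dist_nonneg, le_rfl⟩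
    (hcont A) (hcont B) ?_ ?_
  · rw [hG.1, Metric.infDist_zero_of_mem hx]
    exact Metric.infDist_nonneg
  · rw [hG.2.1, Metric.infDist_zero_of_mem hz]
    exact Metric.infDist_nonneg

-- A point of the geodesic equally close to the parts of `c` before and after time `t` is close to
-- both of them, and these two parts can only be close to each other near time `t`.
theorem IsQuasiGeodesicSeg.exists_dist_le (hX : GeodesicSpace X) (hC : 0 ≤ C)
    (hB : AreaBound X (1 / 2500) C) (hG : IsGeodesicSeg x z G) (hc : IsQuasiGeodesicSeg x z l c)
    {t : ℝ} (ht : t ∈ Set.Icc 0 l) :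
    ∃ s ∈ Set.Icc 0 (dist x z), dist (c t) (G s) ≤ 7 * (C + 8) := by
  have hsubl : Set.Icc 0 t ⊆ Set.Icc 0 l := Set.Icc_subset_Icc_right ht.2
  have hsubr : Set.Icc t l ⊆ Set.Icc 0 l := Set.Icc_subset_Icc_left ht.1
  have hcompact {S : Set ℝ} (hS : IsCompact S) (h : S ⊆ Set.Icc 0 l) : IsCompact (c '' S) :=
    hS.image_of_continuousOn (hc.lipschitzOnWith.continuousOn.mono h)
  have hx : x ∈ c '' Set.Icc 0 t := ⟨0, ⟨le_rfl, ht.1⟩, hc.source⟩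
  have hz : z ∈ c '' Set.Icc t l := ⟨l, ⟨ht.2, le_rfl⟩, hc.target⟩
  obtain ⟨s, hs, heq⟩ := exists_infDist_eq_infDist hG hx hz
  have hclose : Metric.infDist (G s) (c '' Set.Icc 0 t) ≤ C + 8 := by
    obtain ⟨k, hk, hdk⟩ := (hcompact isCompact_Icc le_rfl).exists_infDist_eq_dist
      ⟨x, Set.image_mono hsubl hx⟩ (G s)
    have hdist := hdk ▸ hc.infDist_geodesic_le hX hC hB hG hs
    rw [← Set.Icc_union_Icc_eq_Icc ht.1 ht.2, Set.image_union] at hk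
    rcases hk with hk | hk
    · exact (Metric.infDist_le_dist_of_mem hk).trans hdist
    · exact heq ▸ (Metric.infDist_le_dist_of_mem hk).trans hdist
  obtain ⟨_, ⟨a, ha, rfl⟩, hda⟩ :=
    (hcompact isCompact_Icc hsubl).exists_infDist_eq_dist ⟨x, hx⟩ (G s)
  obtain ⟨_, ⟨b, hb, rfl⟩, hdb⟩ :=
    (hcompact isCompact_Icc hsubr).exists_infDist_eq_dist ⟨z, hz⟩ (G s)
  rw [← heq] at hdb
  have hab : b - a ≤ 6 * (C + 8) := by
    linarith [hc.abs_sub_le b (hsubr hb) a (hsubl ha), le_abs_self (b - a),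
      dist_triangle_left (c b) (c a) (G s)]
  have hta : dist (c t) (c a) ≤ t - a := by
    simpa [Real.dist_eq, abs_of_nonneg (sub_nonneg.2 ha.2)] using
      hc.lipschitzOnWith.dist_le_mul t ht a (hsubl ha)
  refine ⟨s, hs, ?_⟩
  linarith [dist_triangle_right (c t) (G s) (c a), hb.1]

-- As `g t` is nearest to `z`, the point `h r` is at least as far from `g a` as from `g t`.
lemma sub_add_le_three_mul_dist {h : ℝ → X} (hg : IsGeodesicSeg x y g) {t : ℝ}
    (ht : t ∈ Set.Icc 0 (dist x y))
    (hmin : IsMinOn (fun s => dist (g s) z) (Set.Icc 0 (dist x y)) t)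
    (hh : IsGeodesicSeg (g t) z h) {a r : ℝ} (ha : 0 ≤ a) (hat : a ≤ t) (hr : 0 ≤ r)
    (hr' : r ≤ dist (g t) z) : t - a + r ≤ 3 * dist (g a) (h r) := by
  have hga : dist (g a) (g t) = t - a := hg.dist_eq_sub ha hat ht.2
  have hgr : dist (g t) (h r) = r := by simpa [hh.1] using hh.dist_eq_sub le_rfl hr hr'
  have hrz : dist (h r) z = dist (g t) z - r := by
    simpa [hh.2.1] using hh.dist_eq_sub hr hr' le_rfl
  have hmin_a : dist (g t) z ≤ dist (g a) z := hmin ⟨ha, hat.trans ht.2⟩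
  linarith [dist_triangle (g a) (h r) z, dist_triangle_right (g a) (g t) (h r)]

lemma isQuasiGeodesicSeg_ite {h : ℝ → X} (hg : IsGeodesicSeg x y g) {t : ℝ}
    (ht : t ∈ Set.Icc 0 (dist x y))
    (hmin : IsMinOn (fun s => dist (g s) z) (Set.Icc 0 (dist x y)) t)
    (hh : IsGeodesicSeg (g t) z h) :
    IsQuasiGeodesicSeg x z (t + dist (g t) z) fun s => if s ≤ t then g s else h (s - t) := by
  have hjoin : g t = h (t - t) := by rw [sub_self, hh.1]
  have hgt : LipschitzOnWith 1 g (Set.Icc 0 t) :=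
    hg.lipschitzOnWith.mono (Set.Icc_subset_Icc_right ht.2)
  have hht : LipschitzOnWith 1 (fun s => h (s - t)) (Set.Icc t (t + dist (g t) z)) := by
    have hsub : LipschitzWith 1 fun s : ℝ => s - t := by
      simpa using LipschitzWith.id.sub (LipschitzWith.const t)
    simpa [Function.comp_def] using hh.lipschitzOnWith.comp hsub.lipschitzOnWith fun s hs =>
      ⟨sub_nonneg.2 hs.1, by linarith [hs.2]⟩
  refine ⟨add_nonneg ht.1 dist_nonneg, by simp [ht.1, hg.1], ?_,
    lipschitzOnWith_Icc_ite hgt hht hjoin, fun a ha b hb => ?_⟩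
  · split_ifs with hle
    · have hzero : dist (g t) z = 0 := le_antisymm (by linarith) dist_nonneg
      rw [hzero, add_zero, dist_eq_zero.1 hzero]
    · rw [add_sub_cancel_left, hh.2.1]
  wlog hab : a ≤ b generalizing a b
  · rw [abs_sub_comm, dist_comm]
    exact this b hb a ha (le_of_not_ge hab)
  rw [abs_sub_comm, abs_of_nonneg (sub_nonneg.2 hab)]
  rcases le_or_gt b t with hbt | hbt
  · simp only [if_pos hbt, if_pos (hab.trans hbt)]
    rw [hg.dist_eq_sub ha.1 hab (hbt.trans ht.2)]
    linarith
  have hb' : b - t ≤ dist (g t) z := by linarith [hb.2]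
  rcases le_or_gt a t with hat | hat
  · simp only [if_pos hat, if_neg hbt.not_ge]
    linarith [sub_add_le_three_mul_dist hg ht hmin hh ha.1 hat (sub_nonneg.2 hbt.le) hb']
  · simp only [if_neg hbt.not_ge, if_neg hat.not_ge]
    rw [hh.dist_eq_sub (sub_nonneg.2 hat.le) (sub_le_sub_right hab t) hb']
    linarith

lemma AreaBound.exists_dist_le_of_isMinOn (hC : 0 ≤ C) (hB : AreaBound X (1 / 2500) C)
    (hX : GeodesicSpace X) (hg : IsGeodesicSeg x y g) (hG : IsGeodesicSeg x z G) {t : ℝ}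
    (ht : t ∈ Set.Icc 0 (dist x y))
    (hmin : IsMinOn (fun s => dist (g s) z) (Set.Icc 0 (dist x y)) t) {s : ℝ} (hs : 0 ≤ s)
    (hst : s ≤ t) : ∃ s' ∈ Set.Icc 0 (dist x z), dist (g s) (G s') ≤ 7 * (C + 8) := by
  obtain ⟨h, hh⟩ := hX (g t) z
  simpa only [if_pos hst] using (isQuasiGeodesicSeg_ite hg ht hmin hh).exists_dist_le hX hC hB hG
    ⟨hs, hst.trans (le_add_of_nonneg_right dist_nonneg)⟩

theorem gromovHyperbolic_of_areaBound (hX : GeodesicSpace X) (hC : 0 ≤ C)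
    (hB : AreaBound X (1 / 2500) C) : GromovHyperbolic X := by
  refine ⟨7 * (C + 8), by linarith, fun x y z gxy gyz gzx hxy hyz hzx s hs => ?_⟩
  obtain ⟨t, ht, hmin⟩ := isCompact_Icc.exists_isMinOn ⟨s, hs⟩
    ((continuous_id.dist (continuous_const (y := z))).comp_continuousOn
      hxy.lipschitzOnWith.continuousOn)
  rcases le_total s t with hst | hts
  · obtain ⟨s', hs', hdist⟩ :=
      hB.exists_dist_le_of_isMinOn hC hX hxy hzx.reverse ht hmin hs.1 hst
    rw [dist_comm x z] at hs'
    exact ⟨_, Or.inr ⟨dist z x - s', ⟨by linarith [hs'.2], by linarith [hs'.1]⟩, rfl⟩, hdist⟩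
  · have hmin' : IsMinOn (fun r => dist (gxy (dist x y - r)) z) (Set.Icc 0 (dist y x))
        (dist x y - t) := fun r hr => by
      rw [dist_comm y x] at hr
      simpa using hmin (show dist x y - r ∈ Set.Icc 0 (dist x y) from
        ⟨by linarith [hr.2], by linarith [hr.1]⟩)
    obtain ⟨s', hs', hdist⟩ := hB.exists_dist_le_of_isMinOn hC hX hxy.reverse hyz
      (by rw [dist_comm y x]; exact ⟨by linarith [ht.2], by linarith [ht.1]⟩) hmin'
      (sub_nonneg.2 hs.2) (sub_le_sub_left hts _)
    rw [sub_sub_cancel] at hdist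
    exact ⟨_, Or.inl ⟨s', hs', rfl⟩, hdist⟩

end QuasiGeodesics

lemma isometry_kuratowski (X : Type u) [MetricSpace X] (x₀ : X) :
    Isometry (kuratowski X x₀) := by
  refine Isometry.of_dist_eq fun x y => ?_
  have happly (z : X) : (kuratowski X x₀ x - kuratowski X x₀ y) z = dist x z - dist y z :=
    sub_sub_sub_cancel_right _ _ _
  rw [dist_eq_norm]
  refine le_antisymm (lp.norm_le_of_forall_le dist_nonneg fun z => ?_) ?_
  · rw [happly]
    exact abs_dist_sub_le x y z
  · simpa [happly] using
      lp.norm_apply_le_norm ENNReal.top_ne_zero (kuratowski X x₀ x - kuratowski X x₀ y) y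

theorem fillrad_hyperbolic_general {X : Type u} {Y : Type v} [MetricSpace X]
    [PseudoMetricSpace Y] {ι : X → Y} (hι : Isometry ι) (hX : GeodesicSpace X) {ε s₀ : ℝ}
    (hε : 0 < ε)
    (h : ∀ γ : ℝ → X, IsLipLoop γ → s₀ ≤ loopLength γ →
      ∃ φ : ℝ × ℝ → Y, ContinuousOn φ D2 ∧
        (∀ s ∈ Set.Icc (0 : ℝ) 1, φ (circlePoint s) = ι (γ s)) ∧
        ∀ w ∈ D2, Metric.infDist (φ w) (ι '' (γ '' Set.Icc 0 1)) ≤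
          (1 - ε) * (3 / 32) * loopLength γ) :
    GromovHyperbolic X := by
  obtain ⟨N, hN⟩ := exists_hasShortTriangles hι hX hε h
  obtain ⟨C, hC, hB⟩ := hN.exists_areaBound hX (κ := 1 / 2500) (by norm_num)
  exact gromovHyperbolic_of_areaBound hX hC hB

/-- Theorem 6.2, filling radius version: let `X` be a geodesic
metric space admitting a disc-thickening with a quadratic isoperimetric inequality.
If there are `ε ∈ (0,1)` and `s₀ > 0` such that every Lipschitz loop `γ` in `X` of
length at least `s₀` bounds a singular Lipschitz disc in `L^∞(X)` whose image is
contained in the closed `(1-ε)·(3/32)·length(γ)`-neighborhood of the image of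
`κ ∘ γ`, then `X` is Gromov hyperbolic. -/
theorem fillrad_hyperbolic {X : Type u} [MetricSpace X] (x₀ : X)
    (hX : GeodesicSpace X) (hadm : HasDiscThickeningQII X)
    (h : ∃ ε : ℝ, 0 < ε ∧ ε < 1 ∧ ∃ s₀ > (0:ℝ), ∀ γ : ℝ → X, IsLipLoop γ →
      s₀ ≤ loopLength γ →
      ∃ φ : ℝ × ℝ → Linfty X, BoundsLoop φ (fun s => kuratowski X x₀ (γ s)) ∧
        ∀ w ∈ D2, Metric.infDist (φ w) (kuratowski X x₀ '' (γ '' Set.Icc 0 1)) ≤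
          (1 - ε) * (3 / 32) * loopLength γ) :
    GromovHyperbolic X := by
  obtain ⟨ε, hε, -, s₀, -, hfill⟩ := h
  exact fillrad_hyperbolic_general (s₀ := s₀) (isometry_kuratowski X x₀) hX hε fun γ hγ hs₀ =>
    let ⟨φ, ⟨⟨_, hφ⟩, hboundary⟩, hnear⟩ := hfill γ hγ hs₀
    ⟨φ, hφ.continuousOn, hboundary, hnear⟩

end SharpIsop
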